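/- Let X be a standard Borel space, E a countable Borel equivalence relation on X, ρ : E → (0,∞) a Borel cocycle, f : X → [0,∞) a Borel function, δ > 0, and ε a real number with ε > sup{ f(x) − f(y) : (x,y) ∈ E }. Then there exist an E-invariant Borel set B ⊆ X and a finite Borel subequivalence relation F of E restricted to B such that ρ restricted to E restricted to the complement of B is smooth and δ·ε > sup{ ∫ f dμ^ρ_{[x]_F} − ∫ f dμ^ρ_{[y]_F} : (x,y) ∈ E restricted to B }. -/

import Mathlib

open MeasureTheory Set ENNReal

namespace CocycleNadkarni

variable {X : Type*} {Γ : Type*}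

/-- The `ρ`-size of `Y` relative to the point `z`: `∑_{y ∈ Y} ρ(y, z)`. -/
noncomputable def eSize (ρ : X → X → ℝ) (Y : Set X) (z : X) : ℝ≥0∞ :=
  ∑' y : Y, ENNReal.ofReal (ρ y z)

/-- The `ρ`-size of `Y` relative to the set `Z`, computed at the point `z`. -/
noncomputable def relSize (ρ : X → X → ℝ) (Y Z : Set X) (z : X) : ℝ≥0∞ :=
  eSize ρ Y z / eSize ρ Z z

/-- Real-valued `ρ`-size (used for finite sets). -/
noncomputable def rSize (ρ : X → X → ℝ) (Y : Set X) (z : X) : ℝ :=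
  ∑' y : Y, ρ y z

/-- `∫_C f dμ^ρ_S`, computed at the point `z`. -/
noncomputable def avgOn (ρ : X → X → ℝ) (f : X → ℝ) (S C : Set X) (z : X) : ℝ :=
  (∑' y : ↥(S ∩ C), f y * ρ y z) / rSize ρ S z

/-- countable Borel equivalence relation -/
def IsCBER [MeasurableSpace X] (E : X → X → Prop) : Prop :=
  Equivalence E ∧ MeasurableSet {p : X × X | E p.1 p.2} ∧ ∀ x : X, {y | E x y}.Countable

/-- Borel cocycle `ρ : E → (0, ∞)` (as a total function whose values off `E` are irrelevant). -/
def IsCocycle [MeasurableSpace X] (E : X → X → Prop) (ρ : X → X → ℝ) : Prop :=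
  Measurable (fun p : X × X => ρ p.1 p.2) ∧
    (∀ ⦃x y : X⦄, E x y → 0 < ρ x y) ∧
    ∀ ⦃x y z : X⦄, E x y → E y z → ρ x z = ρ x y * ρ y z

/-- Borel cocycle into a group `Γ`. -/
def IsGrpCocycle [MeasurableSpace X] [Group Γ] [MeasurableSpace Γ]
    (E : X → X → Prop) (ρ : X → X → Γ) : Prop :=
  Measurable (fun p : X × X => ρ p.1 p.2) ∧
    ∀ ⦃x y z : X⦄, E x y → E y z → ρ x z = ρ x y * ρ y z

/-- finite Borel subequivalence relation of `E` -/
def IsFinSubequiv [MeasurableSpace X] (E F : X → X → Prop) : Prop :=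
  Equivalence F ∧ MeasurableSet {p : X × X | F p.1 p.2} ∧
    (∀ ⦃x y : X⦄, F x y → E x y) ∧ ∀ x : X, {y | F x y}.Finite

/-- finite Borel subequivalence relation of `E` restricted to `W` (extended by the diagonal). -/
def IsFinSubequivOn [MeasurableSpace X] (E : X → X → Prop) (W : Set X)
    (F : X → X → Prop) : Prop :=
  Equivalence F ∧ MeasurableSet {p : X × X | F p.1 p.2} ∧
    (∀ ⦃x y : X⦄, F x y → x = y ∨ (E x y ∧ x ∈ W ∧ y ∈ W)) ∧ ∀ x : X, {y | F x y}.Finite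

/-- `ρ`-invariance of a Borel measure. -/
def IsInvariant [MeasurableSpace X] (E : X → X → Prop) (ρ : X → X → ℝ)
    (μ : Measure X) : Prop :=
  ∀ T : X ≃ᵐ X, (∀ x, E (T x) x) → ∀ B : Set X, MeasurableSet B →
    μ (T '' B) = ∫⁻ x in B, ENNReal.ofReal (ρ (T x) x) ∂μ

/-- invariance w.r.t. the restriction of `ρ` to a set `R` of pairs, via Borel injections
whose graphs are contained in `R⁻¹`. -/
def IsInvariantRel [MeasurableSpace X] (R : Set (X × X)) (ρ : X → X → ℝ)
    (μ : Measure X) : Prop :=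
  ∀ (B : Set X) (T : X → X), MeasurableSet B → Measurable T → Set.InjOn T B →
    (∀ x ∈ B, ((T x, x) : X × X) ∈ R) →
    μ (T '' B) = ∫⁻ x in B, ENNReal.ofReal (ρ (T x) x) ∂μ

/-- a Borel ℕ-coloring of the lacunarity digraph `G^ρ_Z`. -/
def HasColoring [MeasurableSpace X] (E : X → X → Prop) (ρ : X → X → Γ)
    (Z : Set Γ) : Prop :=
  ∃ c : X → ℕ, Measurable c ∧
    ∀ ⦃x y : X⦄, x ≠ y → E x y → ρ x y ∈ Z → c x ≠ c y

/-- smoothness of the cocycle `ρ` restricted to `E` restricted to `W`. -/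
def SmoothOn [MeasurableSpace X] (E : X → X → Prop) (ρ : X → X → ℝ)
    (W : Set X) : Prop :=
  ∃ U : Set ℝ, IsOpen U ∧ (1:ℝ) ∈ U ∧ U ⊆ Set.Ioi 0 ∧
    ∃ c : X → ℕ, Measurable c ∧
      ∀ ⦃x y : X⦄, x ∈ W → y ∈ W → x ≠ y → E x y → ρ x y ∈ U → c x ≠ c y

/-- smoothness of the cocycle `ρ` on `E`. -/
def Smooth [MeasurableSpace X] (E : X → X → Prop) (ρ : X → X → ℝ) : Prop :=
  SmoothOn E ρ Set.univ

/-- `E`-invariance of a set. -/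
def EInvariant (E : X → X → Prop) (B : Set X) : Prop :=
  ∀ ⦃x y : X⦄, E x y → x ∈ B → y ∈ B

/-- a compression of `ρ` over the finite subequivalence relation `F` of `E`. -/
def CompressionOver [MeasurableSpace X] (E F : X → X → Prop) (ρ : X → X → ℝ)
    (φ : X → X) : Prop :=
  (∀ x, E x (φ x)) ∧
  (∀ x : X, relSize ρ (φ ⁻¹' {y | F y x}) {y | F y x} x ≤ 1) ∧
  (∀ x : X, ∃ y, E x y ∧ relSize ρ (φ ⁻¹' {z | F z y}) {z | F z y} y < 1)

/-- a compression of the quotient of `ρ | E | W` by the finite subequivalence relation given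
by the setoid `s`, expressed via representatives. -/
def QuotCompressionOn [MeasurableSpace X] (E : X → X → Prop) (ρ : X → X → ℝ)
    (W : Set X) (s : Setoid X) (φ : Quotient s → Quotient s) : Prop :=
  (∀ ⦃x : X⦄, x ∈ W → ∀ y : X, φ (Quotient.mk s x) = Quotient.mk s y → (E x y ∧ y ∈ W)) ∧
  (∀ ⦃x : X⦄, x ∈ W →
    relSize ρ {y | y ∈ W ∧ φ (Quotient.mk s y) = Quotient.mk s x} {y | s.r y x} x ≤ 1) ∧
  (∀ ⦃x : X⦄, x ∈ W → ∃ y, y ∈ W ∧ E x y ∧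
    relSize ρ {z | z ∈ W ∧ φ (Quotient.mk s z) = Quotient.mk s y} {z | s.r z y} y < 1)


/-- `B` has `ρ`-density at least `ε` relative to `W`. -/
def HasDensityAtLeastOn [MeasurableSpace X] (E : X → X → Prop) (ρ : X → X → ℝ)
    (B W : Set X) (ε : ℝ) : Prop :=
  ∃ F : X → X → Prop, IsFinSubequivOn E W F ∧
    ∀ x ∈ W, ENNReal.ofReal ε ≤ relSize ρ (B ∩ {y | F y x}) {y | F y x} x

/-- `B` has positive `ρ`-density relative to `W`. -/
def HasPosDensityOn [MeasurableSpace X] (E : X → X → Prop) (ρ : X → X → ℝ)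
    (B W : Set X) : Prop :=
  ∃ ε : ℝ, 0 < ε ∧ HasDensityAtLeastOn E ρ B W ε

/-- `B` has σ-positive `ρ`-density relative to `W`. -/
def HasSigmaPosDensityOn [MeasurableSpace X] (E : X → X → Prop) (ρ : X → X → ℝ)
    (B W : Set X) : Prop :=
  ∃ A : ℕ → Set X, (∀ n, MeasurableSet (A n)) ∧ (∀ n, A n ⊆ W) ∧
    (∀ n, ∀ x ∈ A n, ∀ y ∈ W, E x y → y ∈ A n) ∧ W = ⋃ n, A n ∧
    ∀ n, HasPosDensityOn E ρ (B ∩ A n) (A n)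

/-!
If `f` oscillates by at most `s` on each `E`-class, choose a maximal Borel family of pairwise
disjoint finite sets, each inside an `E`-class, over which the `ρ`-average of `f` lies in the middle
third of the range of `f`. Off these sets, a point where `f` is in the lower third and one of the
same class where `f` is in the upper third cannot both have infinitely many peers of their own kind
and of comparable `ρ`-size, since finitely many of those peers would form a further set with average
in the middle third. But `ρ` is smooth on the points with only finitely many such peers, hence on
their saturation, and off this saturation averaging over the family lowers the oscillation to
`2 * s / 3`. Iterating on the quotient, with the induced cocycle, lowers it to `(2 / 3) ^ n * s`.
-/

section LusinNovikov

variable {Z : Type*}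

theorem analyticSet_inter [TopologicalSpace Z] [T2Space Z] {s t : Set Z} (hs : AnalyticSet s)
    (ht : AnalyticSet t) : AnalyticSet (s ∩ t) := by
  rw [inter_eq_iInter]
  exact AnalyticSet.iInter (Bool.forall_bool.2 ⟨ht, hs⟩)

theorem exists_measurableSet_superset_injOn [TopologicalSpace Z] [PolishSpace Z]
    [MeasurableSpace Z] [BorelSpace Z] [TopologicalSpace X] [T2Space X] [MeasurableSpace X]
    [BorelSpace X] {p : Z → X} (hp : Continuous p) {S : Set Z} (hS : AnalyticSet S)
    (hpS : InjOn p S) : ∃ B, S ⊆ B ∧ MeasurableSet B ∧ InjOn p B := by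
  have hb := TopologicalSpace.isBasis_countableBasis Z
  have hbm : ∀ O ∈ TopologicalSpace.countableBasis Z, MeasurableSet O :=
    fun O hO => (hb.isOpen hO).measurableSet
  have hsep : ∀ O ∈ TopologicalSpace.countableBasis Z,
      MeasurablySeparable (p '' (S ∩ O)) (p '' (S ∩ Oᶜ)) := by
    intro O hO
    have hSO := (analyticSet_inter hS (hbm O hO).analyticSet).image_of_continuous hp
    have hSO' := (analyticSet_inter hS (hbm O hO).compl.analyticSet).image_of_continuous hp
    refine hSO.measurablySeparable hSO' ?_
    rw [disjoint_iff_inter_eq_empty, ← hpS.image_inter inter_subset_left inter_subset_left,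
      ← inter_inter_distrib_left, inter_compl_self, inter_empty, image_empty]
  choose! D hSD hDS hD using hsep
  refine ⟨⋂ O ∈ TopologicalSpace.countableBasis Z, {z | z ∈ O ↔ p z ∈ D O}, ?_, ?_, ?_⟩
  · refine subset_iInter₂ fun O hO z hz => ⟨fun hzO => hSD O hO ⟨z, ⟨hz, hzO⟩, rfl⟩, fun hzD => ?_⟩
    by_contra hzO
    exact (hDS O hO).notMem_of_mem_left ⟨z, ⟨hz, hzO⟩, rfl⟩ hzD
  · exact MeasurableSet.biInter (TopologicalSpace.countable_countableBasis Z) fun O hO =>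
      (hbm O hO).iff (hp.measurable (hD O hO))
  · intro z hz w hw hzw
    by_contra hne
    obtain ⟨O, hO, hzO, hOw⟩ := hb.exists_subset_of_mem_open (u := {w}ᶜ) hne isOpen_compl_singleton
    have hpz : p z ∈ D O := (mem_iInter₂.1 hz O hO).1 hzO
    exact hOw ((mem_iInter₂.1 hw O hO).2 (hzw ▸ hpz)) rfl

/-- `S` is a countable union of Borel sets on which `p` is injective. These are the sets that are
negligible in the proof of the Lusin–Novikov theorem. -/
def IsSigmaInj [MeasurableSpace Z] (p : Z → X) (S : Set Z) : Prop :=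
  ∃ D : Set (Set Z), D.Countable ∧ (∀ d ∈ D, MeasurableSet d ∧ InjOn p d) ∧ S = ⋃₀ D

namespace IsSigmaInj

variable [MeasurableSpace Z] {p : Z → X} {S T : Set Z}

theorem measurableSet (h : IsSigmaInj p S) : MeasurableSet S := by
  obtain ⟨D, hD, hm, rfl⟩ := h
  exact MeasurableSet.sUnion hD fun d hd => (hm d hd).1

theorem of_injOn (hS : MeasurableSet S) (hp : InjOn p S) : IsSigmaInj p S :=
  ⟨{S}, countable_singleton S, by simpa using ⟨hS, hp⟩, (sUnion_singleton S).symm⟩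

theorem iUnion {ι : Type*} [Countable ι] {S : ι → Set Z} (h : ∀ i, IsSigmaInj p (S i)) :
    IsSigmaInj p (⋃ i, S i) := by
  choose D hD hm hS using h
  refine ⟨⋃ i, D i, countable_iUnion hD, fun d hd => ?_, ?_⟩
  · obtain ⟨i, hi⟩ := mem_iUnion.1 hd
    exact hm i d hi
  · rw [sUnion_iUnion]
    exact iUnion_congr hS

theorem union (hS : IsSigmaInj p S) (hT : IsSigmaInj p T) : IsSigmaInj p (S ∪ T) := by
  rw [union_eq_iUnion]
  exact iUnion (Bool.forall_bool.2 ⟨hT, hS⟩)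

theorem exists_injective_prodMk (h : IsSigmaInj p univ) :
    ∃ c : Z → ℕ, Measurable c ∧ Function.Injective fun z => (p z, c z) := by
  classical
  obtain ⟨D, hD, hm, hDu⟩ := h
  have hDne : (insert ∅ D).Nonempty := insert_nonempty _ _
  obtain ⟨d, hd⟩ := (hD.insert ∅).exists_eq_range hDne
  have hdm : ∀ n, MeasurableSet (d n) ∧ InjOn p (d n) := fun n => by
    rcases (hd ▸ mem_range_self n : d n ∈ insert ∅ D) with h | h
    · simp [h]
    · exact hm _ h
  have hcov : ∀ z, ∃ n, z ∈ d n := fun z => by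
    obtain ⟨e, he, hze⟩ : z ∈ ⋃₀ D := hDu ▸ mem_univ z
    obtain ⟨n, rfl⟩ : e ∈ range d := hd ▸ mem_insert_of_mem _ he
    exact ⟨n, hze⟩
  refine ⟨fun z => Nat.find (hcov z), measurable_find hcov fun n => (hdm n).1, fun z w hzw => ?_⟩
  obtain ⟨hp, hc⟩ := Prod.mk.inj hzw
  exact (hdm _).2 (Nat.find_spec (hcov z)) ((congrArg d hc).symm ▸ Nat.find_spec (hcov w)) hp

end IsSigmaInj

/-- Some fibre of `p` meets every member of `F` outside `S`. -/
def FibreMeets (p : Z → X) (S : Set Z) (F : Set (Set Z)) : Prop :=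
  ∃ x, ∀ V ∈ F, ∃ z ∈ V \ S, p z = x

theorem FibreMeets.mono {p : Z → X} {S T : Set Z} {F : Set (Set Z)} (h : FibreMeets p T F)
    (hST : S ⊆ T) : FibreMeets p S F :=
  h.imp fun _ hx V hV => (hx V hV).imp fun _ hz => ⟨sdiff_subset_sdiff_right hST hz.1, hz.2⟩

/-- A `p`-negligible set `T` is absorbing for a collection `𝒞` of families of sets if no larger
negligible set destroys more members of `𝒞` than `T` does. -/
structure IsAbsorbing [MeasurableSpace Z] (p : Z → X) (𝒞 : Set (Set (Set Z))) (T : Set Z) :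
    Prop where
  isSigmaInj : IsSigmaInj p T
  fibreMeets : ∀ F ∈ 𝒞, FibreMeets p T F → ∀ S, IsSigmaInj p S → FibreMeets p S F

theorem exists_isAbsorbing [MeasurableSpace Z] (p : Z → X) {𝒞 : Set (Set (Set Z))}
    (h𝒞 : 𝒞.Countable) : ∃ T, IsAbsorbing p 𝒞 T := by
  have hwit : ∀ F : Set (Set Z), ∃ S, IsSigmaInj p S ∧
      (FibreMeets p S F → ∀ S', IsSigmaInj p S' → FibreMeets p S' F) := by
    intro F
    by_cases h : ∀ S, IsSigmaInj p S → FibreMeets p S F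
    · exact ⟨∅, .of_injOn .empty (injOn_empty p), fun _ => h⟩
    · push Not at h
      obtain ⟨S, hS, hSF⟩ := h
      exact ⟨S, hS, fun h => absurd h hSF⟩
  choose S hS hSF using hwit
  have := h𝒞.to_subtype
  exact ⟨⋃ F : 𝒞, S F, .iUnion fun F => hS F, fun F hF hTF =>
    hSF F (hTF.mono (subset_iUnion (fun F : 𝒞 => S F) ⟨F, hF⟩))⟩

/-- A finite family of members of `b` all of which meet, outside `T`, one and the same fibre of
`p`. -/
structure IsLinked (b : Set (Set Z)) (p : Z → X) (T : Set Z) (F : Set (Set Z)) : Prop where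
  finite : F.Finite
  subset : F ⊆ b
  fibreMeets : FibreMeets p T F

/-- `V true` and `V false` can serve as the children of `U` in a Cantor scheme, at a level where
diameters are at most `r`. -/
structure IsSplitting [PseudoMetricSpace Z] (r : ℝ≥0∞) (U : Set Z) (V : Bool → Set Z) :
    Prop where
  closure_subset : ∀ i, closure (V i) ⊆ U
  ediam_le : ∀ i, Metric.ediam (V i) ≤ r
  disjoint : Disjoint (V true) (V false)

theorem exists_isSplitting [MetricSpace Z] {b : Set (Set Z)}
    (hb : TopologicalSpace.IsTopologicalBasis b) {r : ℝ≥0∞} (hr : 0 < r) {U : Set Z}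
    (hU : IsOpen U) {z w : Z} (hz : z ∈ U) (hw : w ∈ U) (hzw : z ≠ w) :
    ∃ V : Bool → Set Z, IsSplitting r U V ∧ (∀ i, V i ∈ b) ∧ z ∈ V true ∧ w ∈ V false := by
  obtain ⟨O, P, hO, hP, hzO, hwP, hOP⟩ := t2_separation hzw
  have hnhds : ∀ ⦃v : Z⦄ ⦃Q : Set Z⦄, IsOpen Q → v ∈ U → v ∈ Q →
      ∃ V ∈ b, v ∈ V ∧ closure V ⊆ U ∩ Q ∩ Metric.eball v (r / 2) := fun v Q hQ hvU hvQ =>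
    hb.exists_closure_subset <| Filter.inter_mem ((hU.inter hQ).mem_nhds ⟨hvU, hvQ⟩)
      (Metric.eball_mem_nhds v (ENNReal.half_pos hr.ne'))
  have hdiam : ∀ ⦃v : Z⦄ ⦃Q V : Set Z⦄, closure V ⊆ U ∩ Q ∩ Metric.eball v (r / 2) →
      Metric.ediam V ≤ r := fun v Q V h =>
    calc Metric.ediam V ≤ Metric.ediam (Metric.eball v (r / 2)) :=
          Metric.ediam_mono (subset_closure.trans (h.trans inter_subset_right))
      _ ≤ 2 * (r / 2) := Metric.ediam_eball_le
      _ = r := ENNReal.mul_div_cancel two_ne_zero ofNat_ne_top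
  obtain ⟨V, hVb, hzV, hV⟩ := hnhds hO hz hzO
  obtain ⟨W, hWb, hwW, hW⟩ := hnhds hP hw hwP
  refine ⟨fun i => cond i V W, ⟨Bool.forall_bool.2 ⟨?_, ?_⟩,
    Bool.forall_bool.2 ⟨hdiam hW, hdiam hV⟩, hOP.mono ?_ ?_⟩, Bool.forall_bool.2 ⟨hWb, hVb⟩,
    hzV, hwW⟩
  · exact hW.trans (inter_subset_left.trans inter_subset_left)
  · exact hV.trans (inter_subset_left.trans inter_subset_left)
  · exact subset_closure.trans (hV.trans (inter_subset_left.trans inter_subset_right))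
  · exact subset_closure.trans (hW.trans (inter_subset_left.trans inter_subset_right))

namespace IsAbsorbing

variable [MetricSpace Z] [CompleteSpace Z] [SecondCountableTopology Z] [MeasurableSpace Z]
  [BorelSpace Z] [TopologicalSpace X] [T2Space X] [MeasurableSpace X] [BorelSpace X] {p : Z → X}
  {b F : Set (Set Z)} {T U : Set Z}

theorem exists_ne_of_isLinked (hT : IsAbsorbing p {F | F.Finite ∧ F ⊆ b} T)
    (hp : Continuous p) (hb : ∀ V ∈ b, IsOpen V) (hF : IsLinked b p T F) (hU : U ∈ F) :
    ∃ z ∈ U \ T, ∃ w ∈ U \ T, z ≠ w ∧ p z = p w ∧ ∀ V ∈ F, ∃ v ∈ V \ T, p v = p z := by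
  by_contra! hcon
  have hm : ∀ V ∈ F, MeasurableSet (V \ T) := fun V hV =>
    (hb V (hF.subset hV)).measurableSet.diff hT.isSigmaInj.measurableSet
  have hS : AnalyticSet ((U \ T) ∩ ⋂ V : F, p ⁻¹' (p '' (V \ T))) := by
    have := hF.finite.countable.to_subtype
    have : Nonempty F := ⟨⟨U, hU⟩⟩
    exact analyticSet_inter (hm U hU).analyticSet <| AnalyticSet.iInter fun V =>
      ((hm V V.2).analyticSet.image_of_continuous hp).preimage hp
  have hpS : InjOn p ((U \ T) ∩ ⋂ V : F, p ⁻¹' (p '' (V \ T))) := by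
    intro z hz w hw hzw
    by_contra hne
    obtain ⟨V, hV, hVz⟩ := hcon z hz.1 w hw.1 hne hzw
    obtain ⟨v, hv, hvz⟩ := mem_iInter.1 hz.2 ⟨V, hV⟩
    exact hVz v hv hvz
  obtain ⟨B, hSB, hB, hpB⟩ := exists_measurableSet_superset_injOn hp hS hpS
  obtain ⟨x, hx⟩ := hT.fibreMeets F ⟨hF.finite, hF.subset⟩ hF.fibreMeets (T ∪ B)
    (hT.isSigmaInj.union (.of_injOn hB hpB))
  obtain ⟨z, ⟨hzU, hzTB⟩, rfl⟩ := hx U hU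
  refine hzTB (Or.inr (hSB ⟨⟨hzU, fun h => hzTB (Or.inl h)⟩, mem_iInter.2 fun V => ?_⟩))
  obtain ⟨v, ⟨hvV, hvTB⟩, hv⟩ := hx V V.2
  exact ⟨v, ⟨hvV, fun h => hvTB (Or.inl h)⟩, hv⟩

theorem exists_isSplitting_mem (hT : IsAbsorbing p {F | F.Finite ∧ F ⊆ b} T)
    (hp : Continuous p) (hb : TopologicalSpace.IsTopologicalBasis b) {r : ℝ≥0∞} (hr : 0 < r)
    (hF : IsLinked b p T F) (hU : U ∈ F) :
    ∃ F', F ⊆ F' ∧ IsLinked b p T F' ∧ ∃ V, IsSplitting r U V ∧ ∀ i, V i ∈ F' := by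
  obtain ⟨z, hz, w, hw, hne, hzw, hFz⟩ :=
    hT.exists_ne_of_isLinked hp (fun V hV => hb.isOpen hV) hF hU
  obtain ⟨V, hV, hVb, hzV, hwV⟩ :=
    exists_isSplitting hb hr (hb.isOpen (hF.subset hU)) hz.1 hw.1 hne
  refine ⟨F ∪ range V, subset_union_left, ⟨hF.finite.union (finite_range V),
    union_subset hF.subset (range_subset_iff.2 hVb), p z, ?_⟩, V, hV, fun i => Or.inr ⟨i, rfl⟩⟩
  rintro _ (hWF | ⟨i | i, rfl⟩)
  · exact hFz _ hWF
  · exact ⟨w, ⟨hwV, hw.2⟩, hzw.symm⟩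
  · exact ⟨z, ⟨hzV, hz.2⟩, rfl⟩

theorem exists_isSplitting_forall_mem (hT : IsAbsorbing p {F | F.Finite ∧ F ⊆ b} T)
    (hp : Continuous p) (hb : TopologicalSpace.IsTopologicalBasis b) {r : ℝ≥0∞} (hr : 0 < r)
    (hF : IsLinked b p T F) :
    ∃ F', IsLinked b p T F' ∧ ∀ U ∈ F, ∃ V, IsSplitting r U V ∧ ∀ i, V i ∈ F' := by
  suffices h : ∀ G ⊆ F, G.Finite → ∃ F', F ⊆ F' ∧ IsLinked b p T F' ∧
      ∀ U ∈ G, ∃ V, IsSplitting r U V ∧ ∀ i, V i ∈ F' by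
    obtain ⟨F', -, hF'⟩ := h F Subset.rfl hF.finite
    exact ⟨F', hF'⟩
  intro G hGF hG
  induction G, hG using Set.Finite.induction_on with
  | empty => exact ⟨F, Subset.rfl, hF, fun U hU => hU.elim⟩
  | @insert U G _ _ ih =>
    obtain ⟨F₁, hF₁, hL₁, hG₁⟩ := ih ((subset_insert U G).trans hGF)
    obtain ⟨F₂, hF₂, hL₂, hU₂⟩ :=
      hT.exists_isSplitting_mem hp hb hr hL₁ (hF₁ (hGF (mem_insert U G)))
    refine ⟨F₂, hF₁.trans hF₂, hL₂, forall_mem_insert.2 ⟨hU₂, fun W hW => ?_⟩⟩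
    obtain ⟨V, hV, hVF⟩ := hG₁ W hW
    exact ⟨V, hV, fun i => hF₂ (hVF i)⟩

theorem exists_cantorScheme (hT : IsAbsorbing p {F | F.Finite ∧ F ⊆ b} T)
    (hp : Continuous p) (hb : TopologicalSpace.IsTopologicalBasis b) (hU : IsLinked b p T {U}) :
    ∃ (F : ℕ → Set (Set Z)) (A : List Bool → Set Z), (∀ n, IsLinked b p T (F n)) ∧
      (∀ l, A l ∈ F l.length) ∧ CantorScheme.ClosureAntitone A ∧ CantorScheme.Disjoint A ∧
      CantorScheme.VanishingDiam A := by
  have hpos : ∀ n : ℕ, (0 : ℝ≥0∞) < (2⁻¹ : ℝ≥0∞) ^ n := fun n =>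
    ENNReal.pow_pos (ENNReal.inv_pos.2 ofNat_ne_top) n
  choose! next hnext hsplit using fun (n : ℕ) (F : Set (Set Z)) (hF : IsLinked b p T F) =>
    hT.exists_isSplitting_forall_mem hp hb (hpos n) hF
  choose! child hchild hchild_mem using hsplit
  let F : ℕ → Set (Set Z) := fun n => Nat.rec {U} next n
  have hF : ∀ n, IsLinked b p T (F n) := fun n => Nat.rec hU (fun n ih => hnext n _ ih) n
  let A : List Bool → Set Z := fun l =>
    List.rec U (fun i l V => child l.length (F l.length) V i) l
  have hA : ∀ l, A l ∈ F l.length := fun l =>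
    List.rec (mem_singleton U) (fun i l ih => hchild_mem _ _ (hF l.length) _ ih i) l
  have hsplit : ∀ l, IsSplitting (2⁻¹ ^ l.length) (A l) fun i => A (i :: l) :=
    fun l => hchild _ _ (hF l.length) _ (hA l)
  refine ⟨F, A, hF, hA, fun l i => (hsplit l).closure_subset i, fun l i j hij => ?_, fun x => ?_⟩
  · cases i <;> cases j
    exacts [absurd rfl hij, (hsplit l).disjoint.symm, (hsplit l).disjoint, absurd rfl hij]
  · refine (Filter.tendsto_add_atTop_iff_nat 1).1 <| tendsto_of_tendsto_of_tendsto_of_le_of_le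
      tendsto_const_nhds (ENNReal.tendsto_pow_atTop_nhds_zero_of_lt_one
        (ENNReal.inv_lt_one.2 one_lt_two)) (fun n => zero_le) fun n => ?_
    have := (hsplit (PiNat.res x n)).ediam_le (x n)
    rwa [PiNat.res_length] at this

theorem exists_not_countable_fibre (hT : IsAbsorbing p {F | F.Finite ∧ F ⊆ b} T) (hp : Continuous p)
    (hb : TopologicalSpace.IsTopologicalBasis b) (hU : IsLinked b p T {U}) :
    ∃ x, ¬(p ⁻¹' {x}).Countable := by
  obtain ⟨F, A, hF, hA, hanti, hdisj, hdiam⟩ := hT.exists_cantorScheme hp hb hU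
  choose x hx using fun n => (hF n).fibreMeets
  choose w hw hwx using hx
  have hdom := hanti.map_of_vanishingDiam hdiam fun l => ⟨_, (hw _ _ (hA l)).1⟩
  let g : (ℕ → Bool) → Z := fun α => (CantorScheme.inducedMap A).2 ⟨α, hdom ▸ mem_univ α⟩
  have hg : Function.Injective g := fun α β h => congrArg Subtype.val (hdisj.map_injective h)
  have hlim : ∀ α, Filter.Tendsto x Filter.atTop (nhds (p (g α))) := by
    intro α
    have hAF : ∀ n, A (PiNat.res α n) ∈ F n := fun n => by
      simpa only [PiNat.res_length] using hA (PiNat.res α n)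
    let v : ℕ → Z := fun n => w n _ (hAF n)
    have hv : Filter.Tendsto v Filter.atTop (nhds (g α)) := by
      refine tendsto_iff_edist_tendsto_0.2 (tendsto_of_tendsto_of_tendsto_of_le_of_le
        tendsto_const_nhds (hdiam α) (fun n => zero_le) fun n => ?_)
      exact Metric.edist_le_ediam_of_mem (hw n _ (hAF n)).1 (CantorScheme.map_mem _ n)
    exact ((hp.tendsto _).comp hv).congr fun n => hwx n _ (hAF n)
  refine ⟨p (g fun _ => false), fun hc => ?_⟩
  have : Countable (ℕ → Bool) := by
    have hsub : range g ⊆ p ⁻¹' {p (g fun _ => false)} :=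
      range_subset_iff.2 fun α => tendsto_nhds_unique (hlim α) (hlim fun _ => false)
    have := (hc.mono hsub).to_subtype
    exact (rangeFactorization_injective.2 hg).countable
  obtain ⟨e, he⟩ := exists_surjective_nat (ℕ → Bool)
  obtain ⟨n, hn⟩ := he fun n => !e n n
  simpa using congrFun hn n

end IsAbsorbing

theorem isSigmaInj_univ_of_continuous [MetricSpace Z] [CompleteSpace Z]
    [SecondCountableTopology Z] [MeasurableSpace Z] [BorelSpace Z] [TopologicalSpace X]
    [T2Space X] [MeasurableSpace X] [BorelSpace X] {p : Z → X} (hp : Continuous p)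
    (hc : ∀ x, (p ⁻¹' {x}).Countable) : IsSigmaInj p univ := by
  have hb := TopologicalSpace.isBasis_countableBasis Z
  have hbc := TopologicalSpace.countable_countableBasis Z
  obtain ⟨T, hT⟩ := exists_isAbsorbing p (countable_ofPred_finite_subset hbc)
  convert hT.isSigmaInj
  refine (eq_univ_of_forall fun z => ?_).symm
  by_contra hz
  obtain ⟨U, hU, hzU, -⟩ := hb.exists_subset_of_mem_open (mem_univ z) isOpen_univ
  have hlinked : IsLinked (TopologicalSpace.countableBasis Z) p T {U} :=
    ⟨finite_singleton U, singleton_subset_iff.2 hU, p z, by simpa using ⟨z, ⟨hzU, hz⟩, rfl⟩⟩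
  obtain ⟨x, hx⟩ := hT.exists_not_countable_fibre hp hb hlinked
  exact hx (hc x)

/-- The **Lusin–Novikov theorem**. -/
theorem exists_injective_prodMk_of_countable_fibres [MeasurableSpace Z] [StandardBorelSpace Z]
    [MeasurableSpace X] [StandardBorelSpace X] {p : Z → X} (hp : Measurable p)
    (hc : ∀ x, (p ⁻¹' {x}).Countable) :
    ∃ c : Z → ℕ, Measurable c ∧ Function.Injective fun z => (p z, c z) := by
  let := upgradeStandardBorel X
  let i := upgradeStandardBorel Z
  let tZ : TopologicalSpace Z := i.toTopologicalSpace
  obtain ⟨t, ht, hpt, hpol⟩ := hp.exists_continuous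
  have : @BorelSpace Z t _ := by
    refine @BorelSpace.mk Z t _ ?_
    rw [eq_borel_upgradeStandardBorel Z]
    exact (borel_eq_borel_of_le hpol i.toPolishSpace ht).symm
  clear_value i
  let := t
  let := TopologicalSpace.upgradeIsCompletelyMetrizable Z
  exact (isSigmaInj_univ_of_continuous hpt hc).exists_injective_prodMk

end LusinNovikov

section Enumeration

/-- A sequence of Borel functions whose values at `x` enumerate, with repetitions, the `E`-class
of `x`. -/
structure IsEnumeration [MeasurableSpace X] (E : X → X → Prop) (g : ℕ → X → X) : Prop where
  measurable : ∀ n, Measurable (g n)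
  iff_exists : ∀ x y, E x y ↔ ∃ n, g n x = y

/-- `x ↦ S x` is a Borel assignment of a subset of the `E`-class of `x` to each point `x`. -/
structure IsBorelAssignment [MeasurableSpace X] (E : X → X → Prop) (S : X → Set X) : Prop where
  measurableSet : MeasurableSet {q : X × X | q.2 ∈ S q.1}
  subset : ∀ x, S x ⊆ {y | E x y}

theorem tsum_subtype_eq_tsum_firstOccurrence {ι M : Type*} [LinearOrder ι] [WellFoundedLT ι]
    [AddCommMonoid M] [TopologicalSpace M] (u : ι → X) {S : Set X} (hS : S ⊆ range u) (h : X → M) :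
    ∑' y : S, h y = ∑' i, {i | u i ∈ S ∧ ∀ j < i, u j ≠ u i}.indicator (h ∘ u) i := by
  have hbij : BijOn u {i | u i ∈ S ∧ ∀ j < i, u j ≠ u i} S := by
    refine ⟨fun i hi => hi.1, fun i hi j hj hij => ?_, fun y hy => ?_⟩
    · rcases lt_trichotomy i j with hlt | heq | hlt
      exacts [absurd hij (hj.2 i hlt), heq, absurd hij.symm (hi.2 j hlt)]
    · have hne : {i | u i = y}.Nonempty := hS hy
      let i := wellFounded_lt.min {i | u i = y} hne
      have hi : u i = y := wellFounded_lt.min_mem {i | u i = y} hne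
      refine ⟨i, ⟨hi.symm ▸ hy, fun j hj hji => ?_⟩, hi⟩
      exact wellFounded_lt.not_lt_min {i | u i = y} (hji.trans hi) hj
  rw [← tsum_subtype]
  exact ((hbij.equiv u).tsum_eq fun y : S => h y).symm

theorem exists_seq_injOn_of_finite [MeasurableSpace X] [StandardBorelSpace X] :
    ∃ h : ℕ → X → ℤ, (∀ n, Measurable (h n)) ∧ ∀ S : Set X, S.Finite → ∃ n, InjOn (h n) S := by
  obtain ⟨e, he⟩ := exists_measurableEmbedding_real X
  refine ⟨fun n x => ⌊n * e x⌋, fun n => Int.measurable_floor.comp (he.measurable.const_mul _),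
    fun S hS => ?_⟩
  have hsep : ∀ x y, ∀ᶠ n : ℕ in Filter.atTop, ⌊n * e x⌋ = ⌊n * e y⌋ → x = y := by
    intro x y
    by_cases hxy : x = y
    · exact .of_forall fun _ _ => hxy
    have hpos : 0 < |e x - e y| := abs_pos.2 (sub_ne_zero.2 (he.injective.ne hxy))
    obtain ⟨N, hN⟩ := exists_nat_gt (1 / |e x - e y|)
    filter_upwards [Filter.eventually_ge_atTop N] with n hn hfloor
    have hlt : |n * e x - n * e y| < 1 := Int.abs_sub_lt_one_of_floor_eq_floor hfloor
    rw [← mul_sub, abs_mul, Nat.abs_cast] at hlt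
    have hNn : (N : ℝ) ≤ n := Nat.cast_le.2 hn
    have hone : 1 < N * |e x - e y| := (div_lt_iff₀ hpos).1 hN
    nlinarith
  have hall : ∀ᶠ n : ℕ in Filter.atTop, ∀ x ∈ S, ∀ y ∈ S, ⌊n * e x⌋ = ⌊n * e y⌋ → x = y :=
    (Filter.eventually_all_finite hS).2 fun x _ => (Filter.eventually_all_finite hS).2 fun y _ =>
      hsep x y
  obtain ⟨n, hn⟩ := hall.exists
  exact ⟨n, fun x hx y hy hxy => hn x hx y hy hxy⟩

namespace IsCBER

variable [MeasurableSpace X] [StandardBorelSpace X] {E : X → X → Prop}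

theorem exists_isEnumeration (hE : IsCBER E) : ∃ g, IsEnumeration E g := by
  classical
  rcases isEmpty_or_nonempty X with hX | hX
  · exact ⟨fun _ x => x, fun _ => measurable_id, isEmptyElim⟩
  obtain ⟨hequiv, hm, hc⟩ := hE
  have := hm.standardBorel
  let p : {q : X × X | E q.1 q.2} → X := fun z => z.1.1
  have hp : Measurable p := measurable_fst.comp measurable_subtype_coe
  have hfib : ∀ x, (p ⁻¹' {x}).Countable := fun x => by
    refine MapsTo.countable_of_injOn (f := fun z => z.1.2) (t := {y | E x y}) ?_ ?_ (hc x)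
    · rintro z rfl
      exact z.2
    · rintro z rfl w (hw : w.1.1 = z.1.1) (hzw : z.1.2 = w.1.2)
      exact Subtype.ext (Prod.ext hw.symm hzw)
  obtain ⟨c, hcm, hinj⟩ := exists_injective_prodMk_of_countable_fibres hp hfib
  obtain ⟨g, hg, hgp⟩ := ((hp.prodMk hcm).measurableEmbedding hinj).exists_measurable_extend
    (measurable_snd.comp measurable_subtype_coe) fun _ => hX
  have hgn : ∀ n, Measurable fun x => g (x, n) := fun n =>
    hg.comp (measurable_id.prodMk measurable_const)
  refine ⟨fun n x => if E x (g (x, n)) then g (x, n) else x, fun n =>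
    .ite (measurable_id.prodMk (hgn n) hm) (hgn n) measurable_id, fun x y => ⟨fun hxy => ?_, ?_⟩⟩
  · have hy : g (x, c ⟨(x, y), hxy⟩) = y := congrFun hgp ⟨(x, y), hxy⟩
    exact ⟨c ⟨(x, y), hxy⟩, by rw [hy, if_pos hxy]⟩
  · rintro ⟨n, rfl⟩
    split_ifs with h
    exacts [h, hequiv.refl x]

theorem measurableSet_exists {Y : Type*} [MeasurableSpace Y] (hE : IsCBER E) {φ : Y → X}
    (hφ : Measurable φ) {Q : Y → X → Prop} (hQ : MeasurableSet {q : Y × X | Q q.1 q.2}) :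
    MeasurableSet {b | ∃ y, E (φ b) y ∧ Q b y} := by
  obtain ⟨g, hg⟩ := hE.exists_isEnumeration
  have hset : {b | ∃ y, E (φ b) y ∧ Q b y} = ⋃ n, {b | Q b (g n (φ b))} := by
    ext b
    simp only [mem_ofPred_eq, mem_iUnion, hg.iff_exists]
    exact ⟨fun ⟨_, ⟨n, hn⟩, hQ⟩ => ⟨n, hn ▸ hQ⟩, fun ⟨n, hQ⟩ => ⟨_, ⟨n, rfl⟩, hQ⟩⟩
  rw [hset]
  exact .iUnion fun n => measurable_id.prodMk ((hg.measurable n).comp hφ) hQ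

theorem measurableSet_forall {Y : Type*} [MeasurableSpace Y] (hE : IsCBER E) {φ : Y → X}
    (hφ : Measurable φ) {Q : Y → X → Prop} (hQ : MeasurableSet {q : Y × X | Q q.1 q.2}) :
    MeasurableSet {b | ∀ y, E (φ b) y → Q b y} := by
  convert (hE.measurableSet_exists hφ (Q := fun b y => ¬Q b y) hQ.compl).compl using 1
  ext b
  simp

theorem exists_measurable_selector (hE : IsCBER E) {Q : X → X → Prop}
    (hQ : MeasurableSet {q : X × X | Q q.1 q.2}) (hex : ∀ x, ∃ y, E x y ∧ Q x y) :
    ∃ t : X → X, Measurable t ∧ ∀ x, E x (t x) ∧ Q x (t x) := by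
  classical
  obtain ⟨g, hg⟩ := hE.exists_isEnumeration
  have hexg : ∀ x, ∃ n, Q x (g n x) := fun x => by
    obtain ⟨y, hxy, hQy⟩ := hex x
    obtain ⟨n, rfl⟩ := (hg.iff_exists x y).1 hxy
    exact ⟨n, hQy⟩
  exact ⟨fun x => g (Nat.find (hexg x)) x,
    .find hg.measurable (fun n => measurable_id.prodMk (hg.measurable n) hQ) hexg,
    fun x => ⟨(hg.iff_exists _ _).2 ⟨_, rfl⟩, Nat.find_spec (hexg x)⟩⟩

theorem measurable_tsum (hE : IsCBER E) {S : X → Set X} (hS : IsBorelAssignment E S)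
    {h : X → X → ℝ} (hh : Measurable fun q : X × X => h q.1 q.2) :
    Measurable fun x => ∑' y : S x, h y x := by
  obtain ⟨g, hg⟩ := hE.exists_isEnumeration
  have hrange : ∀ x, S x ⊆ range fun n => g n x := fun x y hy =>
    (hg.iff_exists x y).1 (hS.subset x hy)
  simp_rw [fun x => tsum_subtype_eq_tsum_firstOccurrence _ (hrange x) fun y => h y x]
  have hfirst : ∀ n, MeasurableSet {x | g n x ∈ S x ∧ ∀ j < n, g j x ≠ g n x} := fun n => by
    refine (measurable_id.prodMk (hg.measurable n) hS.measurableSet).inter ?_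
    change MeasurableSet {x | ∀ j < n, g j x ≠ g n x}
    simp only [ofPred_forall]
    exact .iInter fun j => .iInter fun _ =>
      (measurableSet_eq_fun (hg.measurable j) (hg.measurable n)).compl
  exact .tsum fun n => (hh.comp ((hg.measurable n).prodMk measurable_id)).indicator (hfirst n)

theorem measurableSet_finite (hE : IsCBER E) {S : X → Set X} (hS : IsBorelAssignment E S) :
    MeasurableSet {x | (S x).Finite} := by
  obtain ⟨g, hg⟩ := hE.exists_isEnumeration
  have hset : {x | (S x).Finite} = {x | ∃ m, ∀ n, g n x ∈ S x → ∃ j ≤ m, g j x = g n x} := by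
    ext x
    refine ⟨fun hfin => ?_, fun ⟨m, hm⟩ => ?_⟩
    · choose! i hi using fun y hy => (hg.iff_exists x y).1 (hS.subset x hy)
      obtain ⟨m, hm⟩ := (hfin.image i).bddAbove
      exact ⟨m, fun n hn => ⟨i (g n x), hm ⟨_, hn, rfl⟩, hi _ hn⟩⟩
    · refine ((finite_Iic m).image fun j => g j x).subset fun y hy => ?_
      obtain ⟨n, rfl⟩ := (hg.iff_exists x y).1 (hS.subset x hy)
      exact hm n hy
  rw [hset]
  simp only [ofPred_exists, ofPred_forall]
  refine .iUnion fun m => .iInter fun n =>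
    (measurable_id.prodMk (hg.measurable n) hS.measurableSet).imp ?_
  simp only [ofPred_exists, ofPred_and]
  exact .iUnion fun j =>
    .inter (.const _) (measurableSet_eq_fun (hg.measurable j) (hg.measurable n))

theorem exists_coloring_of_finite (hE : IsCBER E) {S : X → Set X} (hS : IsBorelAssignment E S)
    (hfin : ∀ x, (S x).Finite) :
    ∃ c : X → ℕ, Measurable c ∧ ∀ x, ∀ y ∈ S x, x ≠ y → c x ≠ c y := by
  classical
  obtain ⟨h, hh, hinj⟩ := exists_seq_injOn_of_finite (X := X)
  have hex : ∀ x, ∃ n, ∀ y, E x y → y ∈ S x → h n x = h n y → x = y := fun x => by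
    obtain ⟨n, hn⟩ := hinj _ ((hfin x).insert x)
    exact ⟨n, fun y _ hy => hn (mem_insert x _) (mem_insert_of_mem x hy)⟩
  have hm : ∀ n, MeasurableSet {x | ∀ y, E x y → y ∈ S x → h n x = h n y → x = y} := fun n =>
    hE.measurableSet_forall measurable_id <| hS.measurableSet.imp <|
      (measurableSet_eq_fun ((hh n).comp measurable_fst) ((hh n).comp measurable_snd)).imp
        (measurableSet_eq_fun measurable_fst measurable_snd)
  refine ⟨fun x => Encodable.encode (Nat.find (hex x), h (Nat.find (hex x)) x),
    (measurable_of_countable Encodable.encode).comp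
      ((measurable_find hex hm).prodMk (.find hh hm hex)), fun x y hy hxy hc => hxy ?_⟩
  obtain ⟨hn, hhn⟩ := Prod.mk.inj (Encodable.encode_injective hc)
  rw [← hn] at hhn
  exact Nat.find_spec (hex x) y (hS.subset x hy) hy hhn

end IsCBER

/-- The infimum of `f` over the `E`-class of `x`. -/
noncomputable def classInf (E : X → X → Prop) (f : X → ℝ) (x : X) : ℝ :=
  sInf (f '' {y | E x y})

/-- The smallest `E`-invariant set containing `A`. -/
def saturation (E : X → X → Prop) (A : Set X) : Set X :=
  {x | ∃ y, E x y ∧ y ∈ A}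

theorem eInvariant_compl_saturation {E : X → X → Prop} (hE : Equivalence E) (A : Set X) :
    EInvariant E (saturation E A)ᶜ :=
  fun _ _ hxy hx ⟨z, hyz, hz⟩ => hx ⟨z, hE.trans hxy hyz, hz⟩

theorem classInf_congr {E : X → X → Prop} (hE : Equivalence E) (f : X → ℝ) {x y : X}
    (hxy : E x y) : classInf E f x = classInf E f y :=
  congrArg (fun S => sInf (f '' S)) <| ext fun _ =>
    ⟨fun hz => hE.trans (hE.symm hxy) hz, fun hz => hE.trans hxy hz⟩

namespace IsCBER

variable [MeasurableSpace X] [StandardBorelSpace X] {E : X → X → Prop}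

theorem measurable_classInf (hE : IsCBER E) {f : X → ℝ} (hf : Measurable f) :
    Measurable (classInf E f) := by
  obtain ⟨g, hg⟩ := hE.exists_isEnumeration
  have hset : ∀ x, f '' {y | E x y} = range fun n => f (g n x) := fun x => by
    have : {y | E x y} = range fun n => g n x := ext fun y => hg.iff_exists x y
    rw [this, ← range_comp, Function.comp_def]
  have hinf : classInf E f = fun x => ⨅ n, f (g n x) := funext fun x => congrArg sInf (hset x)
  rw [hinf]
  exact .iInf fun n => hf.comp (hg.measurable n)

theorem measurableSet_saturation (hE : IsCBER E) {A : Set X} (hA : MeasurableSet A) :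
    MeasurableSet (saturation E A) :=
  hE.measurableSet_exists measurable_id (measurable_snd hA)

end IsCBER

theorem IsFinSubequiv.isCBER [MeasurableSpace X] {E F : X → X → Prop} (hF : IsFinSubequiv E F) :
    IsCBER F :=
  ⟨hF.1, hF.2.1, fun x => (hF.2.2.2 x).countable⟩

theorem IsFinSubequiv.exists_transversal [MeasurableSpace X] [StandardBorelSpace X]
    {E F : X → X → Prop} (hF : IsFinSubequiv E F) :
    ∃ T : Set X, MeasurableSet T ∧ ∃ t : X → T, Measurable t ∧ ∀ x u, t x = u ↔ F x u := by
  have hFE := hF.isCBER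
  obtain ⟨hequiv, -, -, hfin⟩ := hF
  obtain ⟨e, he⟩ := exists_measurableEmbedding_real X
  have hmin : MeasurableSet {q : X × X | ∀ z, F q.1 z → e q.2 ≤ e z} :=
    hFE.measurableSet_forall measurable_fst <| measurableSet_le
      (he.measurable.comp (measurable_snd.comp measurable_fst)) (he.measurable.comp measurable_snd)
  obtain ⟨t, ht, hFt⟩ := hFE.exists_measurable_selector hmin fun x =>
    exists_min_image _ e (hfin x) ⟨x, hequiv.refl x⟩
  have htt : ∀ x y, F x y → t x = t y := fun x y hxy => he.injective <| le_antisymm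
    ((hFt x).2 _ (hequiv.trans hxy (hFt y).1))
    ((hFt y).2 _ (hequiv.trans (hequiv.symm hxy) (hFt x).1))
  refine ⟨{x | t x = x}, measurableSet_eq_fun ht measurable_id,
    fun x => ⟨t x, (htt x (t x) (hFt x).1).symm⟩, ht.subtype_mk, fun x u => ⟨?_, fun hxu => ?_⟩⟩
  · rintro rfl
    exact (hFt x).1
  · exact Subtype.ext ((htt x u hxu).trans u.2)

end Enumeration

section MaximalFamilies

/-- The part of the space covered before stage `n` when, at each stage `k`, all sets `S k r` with
`r ∈ A k` that avoid what has been covered so far are added. -/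
def greedyCover (A : ℕ → Set X) (S : ℕ → X → Set X) : ℕ → Set X
  | 0 => ∅
  | n + 1 => greedyCover A S n ∪ ⋃ r ∈ {r ∈ A n | Disjoint (S n r) (greedyCover A S n)}, S n r

/-- The points `r` whose set `S n r` is added at stage `n` of the greedy construction. -/
def greedyCenters (A : ℕ → Set X) (S : ℕ → X → Set X) (n : ℕ) : Set X :=
  {r ∈ A n | Disjoint (S n r) (greedyCover A S n)}

/-- The equivalence relation whose classes are the sets added by the greedy construction and the
remaining singletons. -/
def greedyRel (A : ℕ → Set X) (S : ℕ → X → Set X) (x y : X) : Prop :=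
  x = y ∨ ∃ n, ∃ r ∈ greedyCenters A S n, x ∈ S n r ∧ y ∈ S n r

section

variable {A : ℕ → Set X} {S : ℕ → X → Set X}

theorem greedyCover_succ (n : ℕ) :
    greedyCover A S (n + 1) = greedyCover A S n ∪ ⋃ r ∈ greedyCenters A S n, S n r :=
  rfl

theorem subset_greedyCover_succ {n : ℕ} {r : X} (hr : r ∈ greedyCenters A S n) :
    S n r ⊆ greedyCover A S (n + 1) :=
  (subset_biUnion_of_mem (u := S n) hr).trans subset_union_right

theorem mem_iUnion_greedyCover {x : X} :
    x ∈ ⋃ n, greedyCover A S n ↔ ∃ n, ∃ r ∈ greedyCenters A S n, x ∈ S n r := by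
  refine ⟨fun hx => ?_, fun ⟨n, r, hr, hx⟩ => mem_iUnion.2 ⟨_, subset_greedyCover_succ hr hx⟩⟩
  obtain ⟨n, hn⟩ := mem_iUnion.1 hx
  induction n with
  | zero => exact hn.elim
  | succ n ih =>
    rw [greedyCover_succ] at hn
    rcases hn with hn | hn
    · exact ih hn
    · exact ⟨n, mem_iUnion₂.1 hn |>.imp fun _ ⟨hr, hx⟩ => ⟨hr, hx⟩⟩

theorem not_disjoint_iUnion_greedyCover {n : ℕ} {r : X} (hr : r ∈ A n) (hne : (S n r).Nonempty) :
    ¬Disjoint (S n r) (⋃ n, greedyCover A S n) := fun hdisj => by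
  have hcenter : r ∈ greedyCenters A S n := ⟨hr, hdisj.mono_right (subset_iUnion _ n)⟩
  obtain ⟨z, hz⟩ := hne
  exact disjoint_left.1 hdisj hz (mem_iUnion_greedyCover.2 ⟨n, r, hcenter, hz⟩)

theorem greedyCenters_unique (hA : ∀ n, (A n).PairwiseDisjoint (S n)) {n m : ℕ} {r r' z : X}
    (hr : r ∈ greedyCenters A S n) (hr' : r' ∈ greedyCenters A S m) (hz : z ∈ S n r)
    (hz' : z ∈ S m r') : n = m ∧ r = r' := by
  have hmono : Monotone (greedyCover A S) := monotone_nat_of_le_succ fun _ => subset_union_left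
  have hlt : ∀ {n m r r'}, r ∈ greedyCenters A S n → r' ∈ greedyCenters A S m → z ∈ S n r →
      z ∈ S m r' → ¬n < m := fun hr hr' hz hz' hnm =>
    disjoint_left.1 hr'.2 hz' (hmono hnm (subset_greedyCover_succ hr hz))
  obtain rfl : n = m := le_antisymm (not_lt.1 (hlt hr' hr hz' hz)) (not_lt.1 (hlt hr hr' hz hz'))
  exact ⟨rfl, (hA n).elim_set hr.1 hr'.1 z hz hz'⟩

theorem setOf_greedyRel (hA : ∀ n, (A n).PairwiseDisjoint (S n)) {n : ℕ} {r x : X}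
    (hr : r ∈ greedyCenters A S n) (hx : x ∈ S n r) : {z | greedyRel A S z x} = S n r := by
  ext z
  refine ⟨?_, fun hz => .inr ⟨n, r, hr, hz, hx⟩⟩
  rintro (rfl | ⟨m, r', hr', hz, hx'⟩)
  · exact hx
  · obtain ⟨rfl, rfl⟩ := greedyCenters_unique hA hr hr' hx hx'
    exact hz

theorem eq_of_greedyRel {x z : X} (hx : x ∉ ⋃ n, greedyCover A S n) (hzx : greedyRel A S z x) :
    z = x :=
  hzx.resolve_right fun ⟨n, r, hr, _, hxr⟩ => hx (mem_iUnion_greedyCover.2 ⟨n, r, hr, hxr⟩)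

theorem equivalence_greedyRel (hA : ∀ n, (A n).PairwiseDisjoint (S n)) :
    Equivalence (greedyRel A S) where
  refl _ := .inl rfl
  symm := by
    rintro x y (rfl | ⟨n, r, hr, hx, hy⟩)
    exacts [.inl rfl, .inr ⟨n, r, hr, hy, hx⟩]
  trans := by
    rintro x y z (rfl | ⟨n, r, hr, hx, hy⟩) hyz
    · exact hyz
    rcases hyz with rfl | ⟨m, r', hr', hy', hz⟩
    · exact .inr ⟨n, r, hr, hx, hy⟩
    · obtain ⟨rfl, rfl⟩ := greedyCenters_unique hA hr hr' hy hy'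
      exact .inr ⟨n, r, hr, hx, hz⟩

variable [MeasurableSpace X] [StandardBorelSpace X] {E : X → X → Prop}

theorem IsBorelAssignment.measurableSet_disjoint {S : X → Set X} (hS : IsBorelAssignment E S)
    (hE : IsCBER E) {C : Set X} (hC : MeasurableSet C) :
    MeasurableSet {x | Disjoint (S x) C} := by
  convert hE.measurableSet_forall measurable_id (Q := fun x y => y ∈ S x → y ∉ C)
    (hS.measurableSet.imp (measurable_snd hC.compl)) using 1
  ext x
  exact ⟨fun h y _ hy => disjoint_left.1 h hy, fun h => disjoint_left.2 fun y hy =>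
    h y (hS.subset x hy) hy⟩

theorem measurableSet_greedyCover (hE : IsCBER E) (hA : ∀ n, MeasurableSet (A n))
    (hS : ∀ n, IsBorelAssignment E (S n)) (n : ℕ) : MeasurableSet (greedyCover A S n) := by
  induction n with
  | zero => exact .empty
  | succ n ih =>
    have hC : MeasurableSet (greedyCenters A S n) :=
      (hA n).inter ((hS n).measurableSet_disjoint hE ih)
    rw [greedyCover_succ]
    refine ih.union ?_
    convert hE.measurableSet_exists measurable_id
      (Q := fun z r => r ∈ greedyCenters A S n ∧ z ∈ S n r)
      ((measurable_snd hC).inter (measurable_swap (hS n).measurableSet)) using 1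
    ext z
    simp only [mem_iUnion, exists_prop]
    exact ⟨fun ⟨r, hr, hz⟩ => ⟨r, hE.1.symm ((hS n).subset r hz), hr, hz⟩, fun ⟨r, _, h⟩ => ⟨r, h⟩⟩

theorem measurableSet_greedyRel (hE : IsCBER E) (hA : ∀ n, MeasurableSet (A n))
    (hS : ∀ n, IsBorelAssignment E (S n)) :
    MeasurableSet {q : X × X | greedyRel A S q.1 q.2} := by
  have hC : ∀ n, MeasurableSet (greedyCenters A S n) := fun n =>
    (hA n).inter ((hS n).measurableSet_disjoint hE (measurableSet_greedyCover hE hA hS n))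
  have hstage : ∀ n, MeasurableSet {q : X × X | ∃ r, E q.1 r ∧
      (r ∈ greedyCenters A S n ∧ q.1 ∈ S n r ∧ q.2 ∈ S n r)} := fun n => by
    refine hE.measurableSet_exists measurable_fst
      (Q := fun q r => r ∈ greedyCenters A S n ∧ q.1 ∈ S n r ∧ q.2 ∈ S n r)
      ((measurable_snd (hC n)).inter (.inter ?_ ?_))
    · exact (measurable_snd.prodMk (measurable_fst.comp measurable_fst)) (hS n).measurableSet
    · exact (measurable_snd.prodMk (measurable_snd.comp measurable_fst)) (hS n).measurableSet
  convert (measurableSet_eq_fun measurable_fst measurable_snd).union (.iUnion hstage) using 1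
  ext q
  simp only [greedyRel, mem_ofPred_eq, mem_union, mem_iUnion]
  refine or_congr_right (exists_congr fun n => exists_congr fun r => ⟨fun h => ?_, And.right⟩)
  exact ⟨hE.1.symm ((hS n).subset r h.2.1), h⟩

theorem isFinSubequiv_greedyRel (hE : IsCBER E) (hA : ∀ n, MeasurableSet (A n))
    (hS : ∀ n, IsBorelAssignment E (S n)) (hfin : ∀ n x, (S n x).Finite)
    (hdisj : ∀ n, (A n).PairwiseDisjoint (S n)) : IsFinSubequiv E (greedyRel A S) := by
  have hequiv := equivalence_greedyRel hdisj
  refine ⟨hequiv, measurableSet_greedyRel hE hA hS, ?_, fun x => ?_⟩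
  · rintro x y (rfl | ⟨n, r, -, hx, hy⟩)
    · exact hE.1.refl x
    · exact hE.1.trans (hE.1.symm ((hS n).subset r hx)) ((hS n).subset r hy)
  · have hset : {y | greedyRel A S x y} = {y | greedyRel A S y x} :=
      ext fun y => ⟨fun h => hequiv.symm h, fun h => hequiv.symm h⟩
    rw [hset]
    by_cases hx : x ∈ ⋃ n, greedyCover A S n
    · obtain ⟨n, r, hr, hxr⟩ := mem_iUnion_greedyCover.1 hx
      exact setOf_greedyRel hdisj hr hxr ▸ hfin n r
    · exact (finite_singleton x).subset fun z hz => eq_of_greedyRel hx hz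

end

section

/-- The finite set attached to `x` by the codes in `m`: a code `(i, j, k)` contributes `g i x`. The
entries `j` and `k` only serve to make the sets attached to different points disjoint. -/
def codedSet (g : ℕ → X → X) (m : Finset (ℕ × ℕ × ℤ)) (x : X) : Set X :=
  (fun p : ℕ × ℕ × ℤ => g p.1 x) '' m

/-- The points `x` such that each code `(i, j, k) ∈ m` is correct: `g j` maps `g i x` back to `x`,
and `g i x` has colour `k`. -/
def codingDomain (g : ℕ → X → X) (h : X → ℤ) (m : Finset (ℕ × ℕ × ℤ)) : Set X :=
  {x | ∀ p ∈ m, g p.2.1 (g p.1 x) = x ∧ h (g p.1 x) = p.2.2}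

theorem pairwiseDisjoint_codedSet (g : ℕ → X → X) (h : X → ℤ) {m : Finset (ℕ × ℕ × ℤ)}
    (hm : InjOn (fun p : ℕ × ℕ × ℤ => p.2.2) (m : Set (ℕ × ℕ × ℤ))) :
    (codingDomain g h m).PairwiseDisjoint (codedSet g m) := by
  refine fun x hx y hy hxy => disjoint_left.2 ?_
  rintro _ ⟨p, hp, rfl⟩ ⟨p', hp', hz : g p'.1 y = g p.1 x⟩
  have hk : p.2.2 = p'.2.2 := by rw [← (hx p hp).2, ← (hy p' hp').2, hz]
  obtain rfl : p = p' := hm hp hp' hk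
  exact hxy ((hx p hp).1.symm.trans (hz ▸ (hy p hp').1))

variable [MeasurableSpace X] {E : X → X → Prop}

theorem IsEnumeration.exists_codedSet_eq {g : ℕ → X → X} (hg : IsEnumeration E g)
    (hE : Equivalence E) {h : X → ℤ} {x : X} {S : Set X} (hS : S.Finite) (hSE : S ⊆ {y | E x y})
    (hinj : InjOn h S) :
    ∃ m : Finset (ℕ × ℕ × ℤ), InjOn (fun p : ℕ × ℕ × ℤ => p.2.2) (m : Set (ℕ × ℕ × ℤ)) ∧
      x ∈ codingDomain g h m ∧ codedSet g m x = S := by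
  classical
  choose! i hi using fun y hy => (hg.iff_exists x y).1 (hSE hy)
  choose! j hj using fun y hy => (hg.iff_exists y x).1 (hE.symm (hSE hy))
  let code : X → ℕ × ℕ × ℤ := fun y => (i y, j y, h y)
  refine ⟨hS.toFinset.image code, ?_, fun p hp => ?_, ?_⟩
  · rw [Finset.coe_image, hS.coe_toFinset]
    rintro _ ⟨y, hy, rfl⟩ _ ⟨z, hz, rfl⟩ hyz
    rw [hinj hy hz hyz]
  · obtain ⟨y, hy, rfl⟩ := Finset.mem_image.1 hp
    rw [hS.mem_toFinset] at hy
    simp only [code, hi y hy, hj y hy, and_self]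
  · rw [codedSet, Finset.coe_image, hS.coe_toFinset, image_image]
    exact (image_congr hi).trans (image_id' S)

variable [StandardBorelSpace X]

theorem IsEnumeration.isBorelAssignment_codedSet {g : ℕ → X → X} (hg : IsEnumeration E g)
    (m : Finset (ℕ × ℕ × ℤ)) : IsBorelAssignment E (codedSet g m) where
  measurableSet := by
    have hset : {q : X × X | q.2 ∈ codedSet g m q.1} = ⋃ p ∈ m, {q : X × X | g p.1 q.1 = q.2} := by
      ext q
      simp only [codedSet, mem_image, Finset.mem_coe, mem_ofPred_eq, mem_iUnion, exists_prop]
    rw [hset]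
    exact m.measurableSet_biUnion fun p _ =>
      measurableSet_eq_fun ((hg.measurable _).comp measurable_fst) measurable_snd
  subset x := by
    rintro _ ⟨p, -, rfl⟩
    exact (hg.iff_exists _ _).2 ⟨_, rfl⟩

theorem IsEnumeration.measurableSet_codingDomain {g : ℕ → X → X} (hg : IsEnumeration E g)
    {h : X → ℤ} (hh : Measurable h) (m : Finset (ℕ × ℕ × ℤ)) :
    MeasurableSet (codingDomain g h m) := by
  simp only [codingDomain, ofPred_forall]
  exact m.measurableSet_biInter fun p _ =>
    (measurableSet_eq_fun ((hg.measurable _).comp (hg.measurable _)) measurable_id).inter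
      (measurableSet_eq_fun (hh.comp (hg.measurable _)) measurable_const)

/-- `F` is a finite Borel subequivalence relation of `E` whose restriction to the Borel set `C`
consists of good classes, in the sense that `Good r S` holds for each class `S ⊆ C` of `F` and some
base point `r` in the surrounding `E`-class, which is trivial off `C`, and which admits no further
good finite set disjoint from `C`. -/
structure IsMaximalFamily (E : X → X → Prop) (Good : X → Set X → Prop) (F : X → X → Prop)
    (C : Set X) : Prop where
  isFinSubequiv : IsFinSubequiv E F
  measurableSet : MeasurableSet C
  exists_good : ∀ x ∈ C, ∃ r, E r x ∧ Good r {z | F z x}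
  eq_of_notMem : ∀ x ∉ C, ∀ z, F z x → z = x
  not_good : ∀ x S, S.Finite → S.Nonempty → S ⊆ {y | E x y} → Disjoint S C → ¬Good x S

theorem IsCBER.exists_isMaximalFamily (hE : IsCBER E) {Good : X → Set X → Prop}
    (hGood : ∀ S, IsBorelAssignment E S → MeasurableSet {x | Good x (S x)}) :
    ∃ F C, IsMaximalFamily E Good F C := by
  obtain ⟨g, hg⟩ := hE.exists_isEnumeration
  obtain ⟨h, hh, hinj⟩ := exists_seq_injOn_of_finite (X := X)
  have : Nonempty {m : Finset (ℕ × ℕ × ℤ) //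
      InjOn (fun p : ℕ × ℕ × ℤ => p.2.2) (m : Set (ℕ × ℕ × ℤ))} := ⟨⟨∅, by simp⟩⟩
  obtain ⟨τ, hτ⟩ := exists_surjective_nat (ℕ × {m : Finset (ℕ × ℕ × ℤ) //
    InjOn (fun p : ℕ × ℕ × ℤ => p.2.2) (m : Set (ℕ × ℕ × ℤ))})
  let S : ℕ → X → Set X := fun n => codedSet g (τ n).2
  let A : ℕ → Set X := fun n => codingDomain g (h (τ n).1) (τ n).2 ∩ {x | Good x (S n x)}
  have hS : ∀ n, IsBorelAssignment E (S n) := fun n => hg.isBorelAssignment_codedSet _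
  have hA : ∀ n, MeasurableSet (A n) := fun n =>
    (hg.measurableSet_codingDomain (hh _) _).inter (hGood _ (hS n))
  have hdisj : ∀ n, (A n).PairwiseDisjoint (S n) := fun n =>
    (pairwiseDisjoint_codedSet g _ (τ n).2.2).subset inter_subset_left
  refine ⟨greedyRel A S, ⋃ n, greedyCover A S n, isFinSubequiv_greedyRel hE hA hS
    (fun n x => (τ n).2.1.finite_toSet.image _) hdisj,
    .iUnion (measurableSet_greedyCover hE hA hS), fun x hx => ?_, fun x hx z => eq_of_greedyRel hx,
    fun x T hT hne hTE hTC hgood => ?_⟩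
  · obtain ⟨n, r, hr, hxr⟩ := mem_iUnion_greedyCover.1 hx
    exact ⟨r, (hS n).subset r hxr, (setOf_greedyRel hdisj hr hxr).symm ▸ hr.1.2⟩
  · obtain ⟨k, hk⟩ := hinj T hT
    obtain ⟨m, hm, hxm, rfl⟩ := hg.exists_codedSet_eq hE.1 hT hTE hk
    obtain ⟨n, hn⟩ := hτ (k, ⟨m, hm⟩)
    have hxA : x ∈ A n := by
      simp only [A, S, hn]
      exact ⟨hxm, hgood⟩
    have hSn : S n x = codedSet g m x := by simp only [S, hn]
    exact not_disjoint_iUnion_greedyCover hxA (hSn ▸ hne) (hSn ▸ hTC)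

end

end MaximalFamilies

section Smoothness

variable {Y : Type*} [MeasurableSpace X] [MeasurableSpace Y] {E : X → X → Prop} {ρ : X → X → ℝ}

namespace IsCocycle

theorem self (hρ : IsCocycle E ρ) (hE : Equivalence E) (x : X) : ρ x x = 1 :=
  (mul_eq_left₀ (hρ.2.1 (hE.refl x)).ne').1 (hρ.2.2 (hE.refl x) (hE.refl x)).symm

theorem isBorelAssignment_comparable (hρ : IsCocycle E ρ) (hE : IsCBER E) {A : Set X}
    (hA : MeasurableSet A) :
    IsBorelAssignment E fun x => {y ∈ A | E x y ∧ ρ y x ∈ Ioo (1 / 2) 2} where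
  measurableSet := (measurable_snd hA).inter
    (hE.2.1.inter ((hρ.1.comp measurable_swap) measurableSet_Ioo))
  subset _ _ hy := hy.2.1

end IsCocycle

namespace SmoothOn

theorem union {W W' : Set X} (hW : MeasurableSet W) (h : SmoothOn E ρ W) (h' : SmoothOn E ρ W') :
    SmoothOn E ρ (W ∪ W') := by
  classical
  obtain ⟨U, hU, hU1, hU0, c, hc, hcW⟩ := h
  obtain ⟨U', hU', hU1', -, c', hc', hcW'⟩ := h'
  refine ⟨U ∩ U', hU.inter hU', ⟨hU1, hU1'⟩, inter_subset_left.trans hU0,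
    fun x => if x ∈ W then 2 * c x else 2 * c' x + 1,
    .ite hW (hc.const_mul 2) ((hc'.const_mul 2).add_const 1), fun x y hx hy hxy hE hρ => ?_⟩
  by_cases hxW : x ∈ W <;> by_cases hyW : y ∈ W <;> simp only [hxW, hyW, if_true, if_false]
  · have := hcW hxW hyW hxy hE hρ.1
    omega
  · omega
  · omega
  · have := hcW' (hx.resolve_left hxW) (hy.resolve_left hyW) hxy hE hρ.2
    omega

/-- Points in the same fibre of `t` are separated by the Lusin–Novikov theorem, and a fine
discretization of `log q` absorbs the coboundary. -/
theorem comap [StandardBorelSpace X] [StandardBorelSpace Y] {E' : Y → Y → Prop} {ρ' : Y → Y → ℝ}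
    {W : Set X} {W' : Set Y} (h : SmoothOn E' ρ' W') {t : X → Y} (ht : Measurable t)
    (hfib : ∀ y, (t ⁻¹' {y}).Countable) (htW : MapsTo t W W') {q : X → ℝ} (hq : Measurable q)
    (hq0 : ∀ x, 0 < q x) (hE : ∀ x y, E x y → E' (t x) (t y))
    (hρ : ∀ x y, E x y → ρ' (t x) (t y) = ρ x y * q x / q y) : SmoothOn E ρ W := by
  obtain ⟨U, hU, hU1, -, c, hc, hcW'⟩ := h
  obtain ⟨b, hb, hinj⟩ := exists_injective_prodMk_of_countable_fibres ht hfib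
  have hU1' : (0 : ℝ) ∈ Real.exp ⁻¹' U := by rwa [mem_preimage, Real.exp_zero]
  obtain ⟨η, hη, hηU⟩ := Metric.isOpen_iff.1 (hU.preimage Real.continuous_exp) 0 hU1'
  let d : X → ℤ := fun x => ⌊Real.log (q x) / (η / 2)⌋
  have hd : Measurable d := ((Real.measurable_log.comp hq).div_const _).floor
  refine ⟨Ioo (Real.exp (-(η / 2))) (Real.exp (η / 2)), isOpen_Ioo,
    ⟨Real.exp_lt_one_iff.2 (by linarith), Real.one_lt_exp_iff.2 (by linarith)⟩,
    fun r hr => (Real.exp_pos _).trans hr.1, fun x => Encodable.encode (b x, c (t x), d x),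
    (measurable_of_countable Encodable.encode).comp (hb.prodMk ((hc.comp ht).prodMk hd)),
    fun x y hx hy hxy hExy hr hcol => ?_⟩
  obtain ⟨hbxy, hcd⟩ := Prod.mk.inj (Encodable.encode_injective hcol)
  obtain ⟨hcxy, hdxy⟩ := Prod.mk.inj hcd
  have hne : t x ≠ t y := fun htxy => hxy (hinj (Prod.ext htxy hbxy))
  refine hcW' (htW hx) (htW hy) hne (hE x y hExy) ?_ hcxy
  have hρ0 : 0 < ρ x y := (Real.exp_pos _).trans hr.1
  have hr0 : 0 < ρ x y * q x / q y := div_pos (mul_pos hρ0 (hq0 x)) (hq0 y)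
  have hlog : Real.log (ρ x y * q x / q y) ∈ Metric.ball 0 η := by
    have hlo : -(η / 2) < Real.log (ρ x y) := (Real.lt_log_iff_exp_lt hρ0).2 hr.1
    have hhi : Real.log (ρ x y) < η / 2 := (Real.log_lt_iff_lt_exp hρ0).2 hr.2
    have hqxy := Int.abs_sub_lt_one_of_floor_eq_floor hdxy
    rw [← sub_div, abs_div, abs_of_pos (half_pos hη), div_lt_one (half_pos hη), abs_lt] at hqxy
    rw [Real.log_div (mul_pos hρ0 (hq0 x)).ne' (hq0 y).ne', Real.log_mul hρ0.ne' (hq0 x).ne',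
      mem_ball_zero_iff, Real.norm_eq_abs, abs_lt]
    constructor <;> linarith
  have := hηU hlog
  rwa [mem_preimage, Real.exp_log hr0, ← hρ x y hExy] at this

theorem saturation [StandardBorelSpace X] (hE : IsCBER E) (hρ : IsCocycle E ρ) {A : Set X}
    (hA : MeasurableSet A) (h : SmoothOn E ρ A) : SmoothOn E ρ (saturation E A) := by
  obtain ⟨t, ht, htE⟩ := hE.exists_measurable_selector
    (Q := fun x y => x ∈ CocycleNadkarni.saturation E A → y ∈ A)
    ((measurable_fst (hE.measurableSet_saturation hA)).imp (measurable_snd hA)) fun x => by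
      by_cases hx : x ∈ CocycleNadkarni.saturation E A
      · obtain ⟨y, hxy, hy⟩ := hx
        exact ⟨y, hxy, fun _ => hy⟩
      · exact ⟨x, hE.1.refl x, fun h => absurd h hx⟩
  have hEt : ∀ x, E (t x) x := fun x => hE.1.symm (htE x).1
  have hEtt : ∀ {x y}, E x y → E (t x) (t y) := fun hxy =>
    hE.1.trans (hEt _) (hE.1.trans hxy (htE _).1)
  refine h.comap ht (fun y => (hE.2.2 y).mono ?_) (fun x hx => (htE x).2 hx)
    (hρ.1.comp (ht.prodMk measurable_id)) (fun x => hρ.2.1 (hEt x)) (fun x y => hEtt)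
    fun x y hxy => ?_
  · rintro x rfl
    exact hEt x
  · refine (eq_div_iff (hρ.2.1 (hEt y)).ne').2 ?_
    exact (hρ.2.2 (hEtt hxy) (hEt y)).symm.trans ((hρ.2.2 (hEt x) hxy).trans (mul_comm _ _))

end SmoothOn

/-- The points of `A` whose `E`-class contains only finitely many points of `A` of comparable
`ρ`-size. -/
def sparsePart (E : X → X → Prop) (ρ : X → X → ℝ) (A : Set X) : Set X :=
  {x ∈ A | {y ∈ A | E x y ∧ ρ y x ∈ Ioo (1 / 2) 2}.Finite}

section

variable [StandardBorelSpace X] {A : Set X}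

theorem measurableSet_sparsePart (hE : IsCBER E) (hρ : IsCocycle E ρ) (hA : MeasurableSet A) :
    MeasurableSet (sparsePart E ρ A) :=
  hA.inter (hE.measurableSet_finite (hρ.isBorelAssignment_comparable hE hA))

theorem smoothOn_sparsePart (hE : IsCBER E) (hρ : IsCocycle E ρ) (hA : MeasurableSet A) :
    SmoothOn E ρ (sparsePart E ρ A) := by
  let S : X → Set X := fun x =>
    {y | x ∈ sparsePart E ρ A ∧ y ∈ A ∧ E x y ∧ ρ y x ∈ Ioo (1 / 2) 2}
  have hS : IsBorelAssignment E S :=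
    { measurableSet := (measurable_fst (measurableSet_sparsePart hE hρ hA)).inter
        (hρ.isBorelAssignment_comparable hE hA).measurableSet
      subset := fun _ _ hy => hy.2.2.1 }
  have hfin : ∀ x, (S x).Finite := fun x => by
    by_cases hx : x ∈ sparsePart E ρ A
    · exact hx.2.subset fun y hy => hy.2
    · exact finite_empty.subset fun y hy => hx hy.1
  obtain ⟨c, hc, hcS⟩ := hE.exists_coloring_of_finite hS hfin
  refine ⟨Ioo (1 / 2) 2, isOpen_Ioo, by norm_num, fun r hr => one_half_pos.trans hr.1, c, hc,
    fun x y hx hy hxy hExy hr => ?_⟩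
  exact (hcS y x ⟨hy, hx.1, hE.1.symm hExy, hr⟩ hxy.symm).symm

end

end Smoothness

section Averages

theorem exists_finset_sum_mem_Icc {H : Set X} (hH : H.Infinite) {u : X → ℝ} {c K : ℝ} (hc : 0 < c)
    (hcu : ∀ x ∈ H, c ≤ u x) (huK : ∀ x ∈ H, u x ≤ K) {A : Finset X} (hA : ∑ x ∈ A, u x ≤ 0) :
    ∃ S : Finset X, A ⊆ S ∧ (S : Set X) ⊆ A ∪ H ∧ ∑ x ∈ S, u x ∈ Icc 0 K := by
  classical
  have hK : 0 ≤ K := by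
    obtain ⟨x, hx⟩ := hH.nonempty
    exact hc.le.trans ((hcu x hx).trans (huK x hx))
  obtain ⟨N, hN⟩ := exists_nat_ge (-(∑ x ∈ A, u x) / c)
  rw [div_le_iff₀ hc] at hN
  induction N generalizing A with
  | zero => exact ⟨A, subset_rfl, subset_union_left, by push_cast at hN; linarith, hA.trans hK⟩
  | succ N ih =>
    obtain ⟨x, hxH, hxA⟩ := hH.exists_notMem_finset A
    have hsum : ∑ y ∈ insert x A, u y = u x + ∑ y ∈ A, u y := Finset.sum_insert hxA
    have hsub : ((insert x A : Finset X) : Set X) ⊆ A ∪ H := by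
      rw [Finset.coe_insert]
      exact insert_subset (.inr hxH) subset_union_left
    rcases le_total (∑ y ∈ insert x A, u y) 0 with hle | hge
    · obtain ⟨S, hAS, hS, hmem⟩ := ih hle <| by
        push_cast at hN
        linarith [hcu x hxH]
      exact ⟨S, (Finset.subset_insert x A).trans hAS,
        hS.trans (union_subset hsub subset_union_right), hmem⟩
    · exact ⟨insert x A, Finset.subset_insert x A, hsub, hge, by linarith [huK x hxH]⟩

/-- Start with enough points of `L` that adding a point of `H` moves the average by at most
`β - α`, then add points of `H` one by one until the average first exceeds `α`. -/
theorem exists_finset_centerMass_mem_Icc {L H : Set X} (hL : L.Infinite) (hH : H.Infinite)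
    {w f : X → ℝ} {κ κ' V α β M : ℝ} (hκ : 0 < κ) (hκ' : 0 < κ') (hwL : ∀ x ∈ L, κ ≤ w x)
    (hwH : ∀ x ∈ H, w x ∈ Icc κ' V) (hfL : ∀ x ∈ L, f x ≤ α) (hfH : ∀ x ∈ H, f x ∈ Icc β M)
    (hαβ : α < β) :
    ∃ S : Finset X, S.Nonempty ∧ (S : Set X) ⊆ L ∪ H ∧ S.centerMass w f ∈ Icc α β := by
  obtain ⟨N, hN⟩ := exists_nat_ge ((M - α) * V / (κ * (β - α)))
  rw [div_le_iff₀ (mul_pos hκ (sub_pos.2 hαβ))] at hN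
  obtain ⟨A, hAL, hAcard⟩ := hL.exists_subset_card_eq (N + 1)
  have hA0 : ∑ x ∈ A, w x * (f x - α) ≤ 0 := Finset.sum_nonpos fun x hx =>
    mul_nonpos_of_nonneg_of_nonpos (hκ.le.trans (hwL x (hAL hx))) (sub_nonpos.2 (hfL x (hAL hx)))
  obtain ⟨S, hAS, hSsub, hS0, hSK⟩ := exists_finset_sum_mem_Icc hH
    (u := fun x => w x * (f x - α)) (mul_pos hκ' (sub_pos.2 hαβ))
    (fun x hx => mul_le_mul (hwH x hx).1 (by linarith [(hfH x hx).1]) (sub_nonneg.2 hαβ.le)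
      (hκ'.le.trans (hwH x hx).1))
    (fun x hx => mul_le_mul (hwH x hx).2 (sub_le_sub_right (hfH x hx).2 α)
      (by linarith [(hfH x hx).1]) (hκ'.le.trans ((hwH x hx).1.trans (hwH x hx).2))) hA0
  have hSLH : (S : Set X) ⊆ L ∪ H := hSsub.trans (union_subset_union_left H hAL)
  have hw0 : ∀ x ∈ S, 0 < w x := fun x hx =>
    (hSLH hx).elim (fun h => hκ.trans_le (hwL x h)) fun h => hκ'.trans_le (hwH x h).1
  have hAne : A.Nonempty := Finset.card_pos.1 (hAcard ▸ N.succ_pos)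
  have hSne : S.Nonempty := hAne.mono hAS
  have hwA : (N + 1) * κ ≤ ∑ x ∈ S, w x := calc
    (N + 1) * κ = ∑ _x ∈ A, κ := by rw [Finset.sum_const, hAcard, nsmul_eq_mul]; push_cast; rfl
    _ ≤ ∑ x ∈ A, w x := Finset.sum_le_sum fun x hx => hwL x (hAL hx)
    _ ≤ ∑ x ∈ S, w x := Finset.sum_le_sum_of_subset_of_nonneg hAS fun x hx _ => (hw0 x hx).le
  have hwS : 0 < ∑ x ∈ S, w x := Finset.sum_pos hw0 hSne
  have hsum : ∑ x ∈ S, w x * (f x - α) = ∑ x ∈ S, w x * f x - α * ∑ x ∈ S, w x := by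
    simp only [mul_sub, Finset.sum_sub_distrib, Finset.sum_mul, mul_comm α]
  refine ⟨S, hSne, hSLH, ?_⟩
  simp only [Finset.centerMass, smul_eq_mul, inv_mul_eq_div, mem_Icc, le_div_iff₀ hwS,
    div_le_iff₀ hwS]
  constructor
  · linarith
  · nlinarith

theorem centerMass_fiberwise {ι : Type*} [DecidableEq ι] {P : Finset X} {U : Finset ι} {t : X → ι}
    (ht : ∀ x ∈ P, t x ∈ U) (w f : X → ℝ) (hw : ∀ u ∈ U, ∑ x ∈ P with t x = u, w x ≠ 0) :
    P.centerMass w f =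
      U.centerMass (fun u => ∑ x ∈ P with t x = u, w x)
        fun u => {x ∈ P | t x = u}.centerMass w f := by
  have hnum : ∑ x ∈ P, w x * f x = ∑ u ∈ U, (∑ x ∈ P with t x = u, w x) *
      ((∑ x ∈ P with t x = u, w x)⁻¹ * ∑ x ∈ P with t x = u, w x * f x) :=
    (Finset.sum_fiberwise_of_maps_to ht _).symm.trans
      (Finset.sum_congr rfl fun u hu => (mul_inv_cancel_left₀ (hw u hu) _).symm)
  simp only [Finset.centerMass, smul_eq_mul, Finset.sum_fiberwise_of_maps_to ht, hnum]

section avgOn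

variable {ρ : X → X → ℝ}

theorem rSize_coe_finset (S : Finset X) (z : X) : rSize ρ (S : Set X) z = ∑ y ∈ S, ρ y z :=
  S.tsum_subtype' fun y => ρ y z

theorem avgOn_coe_finset (f : X → ℝ) (S : Finset X) (z : X) :
    avgOn ρ f (S : Set X) univ z = S.centerMass (fun y => ρ y z) f := by
  rw [avgOn, rSize_coe_finset, inter_univ, Finset.centerMass, smul_eq_mul, inv_mul_eq_div]
  exact congrArg (· / _) ((S.tsum_subtype' fun y => f y * ρ y z).trans
    (Finset.sum_congr rfl fun y _ => mul_comm _ _))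

variable [MeasurableSpace X] {E : X → X → Prop} {f : X → ℝ}

theorem avgOn_singleton (hρ : IsCocycle E ρ) (hE : Equivalence E) (x : X) :
    avgOn ρ f {x} univ x = f x := by
  rw [← Finset.coe_singleton, avgOn_coe_finset, Finset.centerMass_singleton]
  exact (hρ.self hE x).symm ▸ one_ne_zero

theorem IsCocycle.rSize_eq_mul (hρ : IsCocycle E ρ) {S : Set X} {x y : X} (hS : ∀ z ∈ S, E z x)
    (hxy : E x y) : rSize ρ S y = rSize ρ S x * ρ x y := by
  rw [rSize, rSize, ← tsum_mul_right]
  exact tsum_congr fun z => hρ.2.2 (hS z z.2) hxy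

theorem IsCocycle.avgOn_congr (hρ : IsCocycle E ρ) {S : Set X} {x y : X} (hS : ∀ z ∈ S, E z x)
    (hxy : E x y) : avgOn ρ f S univ y = avgOn ρ f S univ x := by
  have hnum : ∑' z : ↥(S ∩ univ), f z * ρ z y = (∑' z : ↥(S ∩ univ), f z * ρ z x) * ρ x y := by
    rw [← tsum_mul_right]
    exact tsum_congr fun z => by rw [hρ.2.2 (hS z z.2.1) hxy, mul_assoc]
  rw [avgOn, avgOn, hρ.rSize_eq_mul hS hxy, hnum, mul_div_mul_right _ _ (hρ.2.1 hxy).ne']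

variable [StandardBorelSpace X]

theorem IsCBER.measurable_rSize (hE : IsCBER E) (hρ : IsCocycle E ρ) {S : X → Set X}
    (hS : IsBorelAssignment E S) : Measurable fun x => rSize ρ (S x) x :=
  hE.measurable_tsum hS hρ.1

theorem IsCBER.measurable_avgOn (hE : IsCBER E) (hρ : IsCocycle E ρ) (hf : Measurable f)
    {S : X → Set X} (hS : IsBorelAssignment E S) :
    Measurable fun x => avgOn ρ f (S x) univ x := by
  have h : (fun x => avgOn ρ f (S x) univ x) =
      fun x => (∑' y : S x, f y * ρ y x) / rSize ρ (S x) x :=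
    funext fun x => by rw [avgOn, inter_univ]
  rw [h]
  exact (hE.measurable_tsum hS (h := fun y x => f y * ρ y x)
    ((hf.comp measurable_fst).mul hρ.1)).div (hE.measurable_rSize hρ hS)

end avgOn

/-- The `ρ`-average of `f` over the `F`-class of `x`. -/
noncomputable def classAvg (ρ : X → X → ℝ) (F : X → X → Prop) (f : X → ℝ) (x : X) : ℝ :=
  avgOn ρ f {z | F z x} univ x

/-- The values of `f` on the `E`-class of `x` differ by at most `s`. -/
def OscLE (E : X → X → Prop) (f : X → ℝ) (s : ℝ) (x : X) : Prop :=
  ∀ y z, E x y → E x z → f y - f z ≤ s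

namespace OscLE

variable {E : X → X → Prop} {f : X → ℝ} {s : ℝ} {x y : X}

theorem classInf_le (h : OscLE E f s x) (hxy : E x y) : classInf E f x ≤ f y := by
  refine csInf_le ⟨f y - s, ?_⟩ (mem_image_of_mem f hxy)
  rintro _ ⟨z, hxz, rfl⟩
  linarith [h y z hxy hxz]

theorem le_classInf_add (h : OscLE E f s x) (hxy : E x y) : f y ≤ classInf E f x + s := by
  refine sub_le_iff_le_add.1 (le_csInf ⟨f y, mem_image_of_mem f hxy⟩ ?_)
  rintro _ ⟨z, hxz, rfl⟩
  linarith [h y z hxy hxz]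

end OscLE

end Averages

section Quotient

theorem coe_filter_eq_class {F : X → X → Prop} {T : Set X} [DecidableEq T] {t : X → T}
    (htF : ∀ x u, t x = u ↔ F x u) {F' : T → T → Prop} {v u : T} {P : Finset X}
    (hP : (P : Set X) = {z | F' (t z) v}) (hu : F' u v) :
    (({z ∈ P | t z = u} : Finset X) : Set X) = {z | F z u} := by
  ext z
  rw [Finset.mem_coe, Finset.mem_filter, ← Finset.mem_coe, hP, mem_ofPred_eq, mem_ofPred_eq, ← htF]
  refine and_iff_right_of_imp ?_
  rintro rfl
  exact hu

variable {Y : Type*} [MeasurableSpace X] [MeasurableSpace Y] {E F : X → X → Prop} {ρ : X → X → ℝ}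

theorem IsCBER.comap (hE : IsCBER E) {i : Y → X} (hi : Measurable i) (hinj : i.Injective) :
    IsCBER fun u v => E (i u) (i v) :=
  ⟨hE.1.comap i, (hi.prodMap hi) hE.2.1, fun u => (hE.2.2 (i u)).preimage hinj⟩

theorem IsCocycle.comap (hρ : IsCocycle E ρ) {i : Y → X} (hi : Measurable i) :
    IsCocycle (fun u v => E (i u) (i v)) fun u v => ρ (i u) (i v) :=
  ⟨hρ.1.comp (hi.prodMap hi), fun _ _ h => hρ.2.1 h, fun _ _ _ h h' => hρ.2.2 h h'⟩

/-- The cocycle induced by `ρ` on the quotient by `F`, in terms of representatives: the `ρ`-size of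
the `F`-class of `x` relative to the `F`-class of `y`. -/
noncomputable def quotientCocycle (ρ : X → X → ℝ) (F : X → X → Prop) (x y : X) : ℝ :=
  ρ x y * rSize ρ {z | F z x} x / rSize ρ {z | F z y} y

namespace IsFinSubequiv

theorem isBorelAssignment (hF : IsFinSubequiv E F) (hE : Equivalence E) :
    IsBorelAssignment E fun x => {z | F z x} where
  measurableSet := measurable_swap hF.2.1
  subset _ _ hz := hE.symm (hF.2.2.1 hz)

theorem finite_class (hF : IsFinSubequiv E F) (x : X) : {z | F z x}.Finite :=
  (hF.2.2.2 x).subset fun _ => hF.1.symm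

theorem setOf_congr (hF : IsFinSubequiv E F) {x y : X} (hxy : F x y) : {z | F z x} = {z | F z y} :=
  ext fun _ => ⟨fun hz => hF.1.trans hz hxy, fun hz => hF.1.trans hz (hF.1.symm hxy)⟩

theorem rSize_pos (hF : IsFinSubequiv E F) (hρ : IsCocycle E ρ) (x : X) :
    0 < rSize ρ {z | F z x} x := by
  rw [← (hF.finite_class x).coe_toFinset, rSize_coe_finset]
  exact Finset.sum_pos (fun z hz => hρ.2.1 (hF.2.2.1 ((hF.finite_class x).mem_toFinset.1 hz)))
    ⟨x, (hF.finite_class x).mem_toFinset.2 (hF.1.refl x)⟩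

theorem rSize_class (hF : IsFinSubequiv E F) (hρ : IsCocycle E ρ) {x y : X} (hxy : E x y) :
    rSize ρ {z | F z x} y = rSize ρ {z | F z y} y * quotientCocycle ρ F x y := by
  rw [quotientCocycle, mul_div_cancel₀ _ (hF.rSize_pos hρ y).ne', mul_comm]
  exact hρ.rSize_eq_mul (fun z hz => hF.2.2.1 hz) hxy

theorem avgOn_class (hF : IsFinSubequiv E F) (hρ : IsCocycle E ρ) (f : X → ℝ) {x y : X}
    (hxy : E x y) : avgOn ρ f {z | F z x} univ y = classAvg ρ F f x :=
  hρ.avgOn_congr (fun _ hz => hF.2.2.1 hz) hxy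

theorem quotientCocycle_pos (hF : IsFinSubequiv E F) (hρ : IsCocycle E ρ) {x y : X} (hxy : E x y) :
    0 < quotientCocycle ρ F x y :=
  div_pos (mul_pos (hρ.2.1 hxy) (hF.rSize_pos hρ x)) (hF.rSize_pos hρ y)

theorem isCocycle_quotientCocycle [StandardBorelSpace X] (hF : IsFinSubequiv E F) (hE : IsCBER E)
    (hρ : IsCocycle E ρ) : IsCocycle E (quotientCocycle ρ F) := by
  have hk : Measurable fun x => rSize ρ {z | F z x} x :=
    hE.measurable_rSize hρ (hF.isBorelAssignment hE.1)
  refine ⟨(hρ.1.mul (hk.comp measurable_fst)).div (hk.comp measurable_snd),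
    fun x y => hF.quotientCocycle_pos hρ, fun x y z hxy hyz => ?_⟩
  have := (hF.rSize_pos hρ y).ne'
  rw [quotientCocycle, quotientCocycle, quotientCocycle, hρ.2.2 hxy hyz]
  field_simp

theorem quotientCocycle_congr (hF : IsFinSubequiv E F) (hE : Equivalence E) (hρ : IsCocycle E ρ)
    {x x' y y' : X} (hxx' : F x x') (hyy' : F y y') (hxy : E x y) :
    quotientCocycle ρ F x' y' = quotientCocycle ρ F x y := by
  have hE' : E x' y' := hE.trans (hE.symm (hF.2.2.1 hxx')) (hE.trans hxy (hF.2.2.1 hyy'))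
  have hsize : ∀ {a b}, F a b → rSize ρ {z | F z b} b = rSize ρ {z | F z a} a * ρ a b :=
    fun {a b} hab => by
      rw [← hF.setOf_congr hab]
      exact hρ.rSize_eq_mul (fun z hz => hF.2.2.1 hz) (hF.2.2.1 hab)
  have hcocycle : ρ x y * ρ y y' = ρ x x' * ρ x' y' :=
    (hρ.2.2 hxy (hF.2.2.1 hyy')).symm.trans (hρ.2.2 (hF.2.2.1 hxx') hE')
  rw [quotientCocycle, quotientCocycle, hsize hxx', hsize hyy',
    div_eq_div_iff (mul_pos (hF.rSize_pos hρ y) (hρ.2.1 (hF.2.2.1 hyy'))).ne'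
      (hF.rSize_pos hρ y).ne']
  linear_combination -(rSize ρ {z | F z x} x * rSize ρ {z | F z y} y) * hcocycle

variable {T : Set X} {t : X → T} {F' : T → T → Prop}

theorem comap (hF : IsFinSubequiv E F) (hE : Equivalence E) (ht : Measurable t)
    (htF : ∀ x u, t x = u ↔ F x u) (hF' : IsFinSubequiv (fun u v : T => E u v) F') :
    IsFinSubequiv E fun x y => F' (t x) (t y) := by
  have hFt : ∀ x, F x (t x) := fun x => (htF x _).1 rfl
  refine ⟨hF'.1.comap t, (ht.prodMap ht) hF'.2.1, fun x y hxy => ?_, fun x => ?_⟩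
  · exact hE.trans (hF.2.2.1 (hFt x)) (hE.trans (hF'.2.2.1 hxy) (hE.symm (hF.2.2.1 (hFt y))))
  · refine (hF'.2.2.2 (t x)).preimage' fun u _ => (hF.finite_class u).subset fun y hy => ?_
    exact (htF y u).1 hy

theorem classAvg_comap (hF : IsFinSubequiv E F) (hE : Equivalence E) (hρ : IsCocycle E ρ)
    (ht : Measurable t) (htF : ∀ x u, t x = u ↔ F x u)
    (hF' : IsFinSubequiv (fun u v : T => E u v) F') (f : X → ℝ) (x : X) :
    classAvg ρ (fun x y => F' (t x) (t y)) f x =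
      classAvg (fun u v : T => quotientCocycle ρ F u v) F' (fun u => classAvg ρ F f u) (t x) := by
  classical
  let v := t x
  have hFt : ∀ z, F z (t z) := fun z => (htF z _).1 rfl
  have hG := hF.comap hE ht htF hF'
  let P := (hG.finite_class x).toFinset
  let U := (hF'.finite_class v).toFinset
  have hP : (P : Set X) = {z | F' (t z) v} := (hG.finite_class x).coe_toFinset
  have hU : (U : Set T) = {u | F' u v} := (hF'.finite_class v).coe_toFinset
  have hF'v : ∀ u ∈ U, F' u v := fun u hu => (hF'.finite_class v).mem_toFinset.1 hu
  have hEuv : ∀ u ∈ U, E u v := fun u hu => hF'.2.2.1 (hF'v u hu)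
  have hweight : ∀ u ∈ U, ∑ z ∈ P with t z = u, ρ z v =
      rSize ρ {z | F z v} v * quotientCocycle ρ F u v := fun u hu => by
    rw [← rSize_coe_finset, coe_filter_eq_class htF hP (hF'v u hu), hF.rSize_class hρ (hEuv u hu)]
  have hvalue : ∀ u ∈ U, {z ∈ P | t z = u}.centerMass (fun z => ρ z v) f = classAvg ρ F f u :=
    fun u hu => by
      rw [← avgOn_coe_finset, coe_filter_eq_class htF hP (hF'v u hu),
        hF.avgOn_class hρ f (hEuv u hu)]
  have hk0 := (hF.rSize_pos hρ v).ne'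
  have hq0 : ∀ u ∈ U, quotientCocycle ρ F u v ≠ 0 := fun u hu =>
    (hF.quotientCocycle_pos hρ (hEuv u hu)).ne'
  have htP : ∀ z ∈ P, t z ∈ U := fun z hz =>
    (hF'.finite_class v).mem_toFinset.2 ((hG.finite_class x).mem_toFinset.1 hz)
  calc classAvg ρ (fun x y => F' (t x) (t y)) f x
    _ = avgOn ρ f P univ v := by
      rw [hP]
      exact (hG.avgOn_class hρ f (hF.2.2.1 (hFt x))).symm
    _ = P.centerMass (fun z => ρ z v) f := avgOn_coe_finset f P v
    _ = U.centerMass (fun u => rSize ρ {z | F z v} v * quotientCocycle ρ F u v)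
          fun u => classAvg ρ F f u := by
      rw [centerMass_fiberwise htP _ _ fun u hu => hweight u hu ▸ mul_ne_zero hk0 (hq0 u hu),
        Finset.centerMass_congr_weights hweight,
        Finset.centerMass_congr_fun fun u hu _ => hvalue u hu]
    _ = U.centerMass (fun u => quotientCocycle ρ F u v) fun u => classAvg ρ F f u :=
      Finset.centerMass_smul_left U _ hk0
    _ = classAvg (fun u v : T => quotientCocycle ρ F u v) F' (fun u => classAvg ρ F f u) v := by
      rw [classAvg, ← hU, avgOn_coe_finset (ρ := fun u v : T => quotientCocycle ρ F u v)]

end IsFinSubequiv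

end Quotient

section BalancedSets

variable {E : X → X → Prop} {ρ : X → X → ℝ} {f : X → ℝ} {s : ℝ}

/-- The points at which `f` lies in the lower third of the range `[inf f, inf f + s]` over the
`E`-class. -/
def lowSet (E : X → X → Prop) (f : X → ℝ) (s : ℝ) : Set X :=
  {x | f x < classInf E f x + s / 3}

/-- The points at which `f` lies in the upper third of the range `[inf f, inf f + s]` over the
`E`-class. -/
def highSet (E : X → X → Prop) (f : X → ℝ) (s : ℝ) : Set X :=
  {x | classInf E f x + 2 * s / 3 < f x}

/-- The `ρ`-average of `f` over the subset `S` of the `E`-class of `x` lies in the middle third of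
the range `[inf f, inf f + s]` over that class. -/
def IsBalanced (E : X → X → Prop) (ρ : X → X → ℝ) (f : X → ℝ) (s : ℝ) (x : X) (S : Set X) : Prop :=
  avgOn ρ f S univ x ∈ Icc (classInf E f x + s / 3) (classInf E f x + 2 * s / 3)

variable [MeasurableSpace X]

theorem IsBalanced.congr (hE : Equivalence E) (hρ : IsCocycle E ρ) {S : Set X} {x y : X}
    (h : IsBalanced E ρ f s x S) (hS : ∀ z ∈ S, E z x) (hxy : E x y) : IsBalanced E ρ f s y S := by
  rwa [IsBalanced, hρ.avgOn_congr hS hxy, ← classInf_congr hE f hxy]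

theorem exists_finset_isBalanced (hE : Equivalence E) (hρ : IsCocycle E ρ) {x y : X} (hxy : E x y)
    (hs : 0 < s) (hosc : OscLE E f s x) {L H : Set X} (hLlow : L ⊆ lowSet E f s)
    (hHhigh : H ⊆ highSet E f s) (hL : {z ∈ L | E x z ∧ ρ z x ∈ Ioo (1 / 2) 2}.Infinite)
    (hH : {z ∈ H | E y z ∧ ρ z y ∈ Ioo (1 / 2) 2}.Infinite) :
    ∃ S : Finset X, S.Nonempty ∧ (S : Set X) ⊆ {z | E x z} ∧ (S : Set X) ⊆ L ∪ H ∧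
      IsBalanced E ρ f s x S := by
  have hyx : 0 < ρ y x := hρ.2.1 (hE.symm hxy)
  obtain ⟨S, hne, hS, hmem⟩ := exists_finset_centerMass_mem_Icc hL hH (w := fun z => ρ z x) (f := f)
    (κ := 1 / 2) (κ' := 1 / 2 * ρ y x) (V := 2 * ρ y x) (α := classInf E f x + s / 3)
    (β := classInf E f x + 2 * s / 3) (M := classInf E f x + s) one_half_pos (by positivity)
    (fun z hz => hz.2.2.1.le)
    (fun z hz => by
      rw [hρ.2.2 (hE.symm hz.2.1) (hE.symm hxy)]
      exact ⟨mul_le_mul_of_nonneg_right hz.2.2.1.le hyx.le,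
        mul_le_mul_of_nonneg_right hz.2.2.2.le hyx.le⟩)
    (fun z hz => by
      rw [classInf_congr hE f hz.2.1]
      exact (hLlow hz.1).le)
    (fun z hz => by
      have hxz := hE.trans hxy hz.2.1
      refine ⟨?_, hosc.le_classInf_add hxz⟩
      rw [classInf_congr hE f hxz]
      exact (hHhigh hz.1).le)
    (by linarith)
  refine ⟨S, hne, fun z hz => ?_, hS.trans (union_subset_union (sep_subset _ _) (sep_subset _ _)),
    ?_⟩
  · exact (hS hz).elim (fun h => h.2.1) fun h => hE.trans hxy h.2.1
  · rwa [IsBalanced, avgOn_coe_finset]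

theorem IsMaximalFamily.le_classAvg_and_classAvg_le (hE : Equivalence E) (hρ : IsCocycle E ρ)
    {F : X → X → Prop} {C : Set X} (h : IsMaximalFamily E (IsBalanced E ρ f s) F C) (x : X) :
    (classInf E f x + s / 3 ≤ classAvg ρ F f x ∨
      x ∈ lowSet E f s \ C ∧ classAvg ρ F f x = f x) ∧
    (classAvg ρ F f x ≤ classInf E f x + 2 * s / 3 ∨
      x ∈ highSet E f s \ C ∧ classAvg ρ F f x = f x) := by
  obtain ⟨hF, -, hFE, -⟩ := h.isFinSubequiv
  by_cases hx : x ∈ C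
  · obtain ⟨r, hrx, hr⟩ := h.exists_good x hx
    have hbal := hr.congr hE hρ (fun z hz => hE.trans (hFE hz) (hE.symm hrx)) hrx
    exact ⟨.inl hbal.1, .inl hbal.2⟩
  · have hclass : {z | F z x} = {x} := by
      exact Subset.antisymm (h.eq_of_notMem x hx) (singleton_subset_iff.2 (hF.refl x))
    have havg : classAvg ρ F f x = f x := by rw [classAvg, hclass, avgOn_singleton hρ hE]
    rw [havg]
    exact ⟨(le_or_gt _ _).imp_right fun hlt => ⟨⟨hlt, hx⟩, rfl⟩,
      (le_or_gt _ _).imp_right fun hlt => ⟨⟨hlt, hx⟩, rfl⟩⟩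

theorem IsMaximalFamily.mem_sparsePart_or (hE : Equivalence E) (hρ : IsCocycle E ρ)
    {F : X → X → Prop} {C : Set X} (h : IsMaximalFamily E (IsBalanced E ρ f s) F C) {x y : X}
    (hxy : E x y) (hosc : OscLE E f s x) (hx : x ∈ lowSet E f s \ C) (hy : y ∈ highSet E f s \ C) :
    x ∈ sparsePart E ρ (lowSet E f s \ C) ∨ y ∈ sparsePart E ρ (highSet E f s \ C) := by
  by_contra! hnot
  have hs : 0 < s := by
    have := hosc.classInf_le (hE.refl x)
    have := hx.1.out
    linarith
  obtain ⟨S, hne, hSE, hS, hbal⟩ := exists_finset_isBalanced hE hρ hxy hs hosc sdiff_subset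
    sdiff_subset (fun hfin => hnot.1 ⟨hx, hfin⟩) fun hfin => hnot.2 ⟨hy, hfin⟩
  refine h.not_good x S S.finite_toSet hne hSE ?_ hbal
  exact disjoint_left.2 fun z hz => (hS hz).elim (fun hz => hz.2) fun hz => hz.2

variable [StandardBorelSpace X]

theorem measurableSet_lowSet (hE : IsCBER E) (hf : Measurable f) :
    MeasurableSet (lowSet E f s) :=
  measurableSet_lt hf ((hE.measurable_classInf hf).add_const _)

theorem measurableSet_highSet (hE : IsCBER E) (hf : Measurable f) :
    MeasurableSet (highSet E f s) :=
  measurableSet_lt ((hE.measurable_classInf hf).add_const _) hf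

theorem measurableSet_isBalanced (hE : IsCBER E) (hρ : IsCocycle E ρ) (hf : Measurable f)
    {S : X → Set X} (hS : IsBorelAssignment E S) :
    MeasurableSet {x | IsBalanced E ρ f s x (S x)} :=
  have havg := hE.measurable_avgOn hρ hf hS
  have hinf := hE.measurable_classInf hf
  (measurableSet_le (hinf.add_const _) havg).inter (measurableSet_le havg (hinf.add_const _))

end BalancedSets

section Flattening

variable [MeasurableSpace X] {E : X → X → Prop} {ρ : X → X → ℝ} {f : X → ℝ} {s s' s'' : ℝ}
  {F : X → X → Prop} {B : Set X}

/-- `ρ` is smooth off the `E`-invariant Borel set `B`, and on `B` averaging over the classes of `F`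
lowers the bound `s` on the oscillation of `f` to `s'`. -/
structure IsFlattening (E : X → X → Prop) (ρ : X → X → ℝ) (f : X → ℝ) (s s' : ℝ)
    (F : X → X → Prop) (B : Set X) : Prop where
  isFinSubequiv : IsFinSubequiv E F
  measurableSet : MeasurableSet B
  eInvariant : EInvariant E B
  smoothOn_compl : SmoothOn E ρ Bᶜ
  oscLE : ∀ x ∈ B, OscLE E f s x → OscLE E (classAvg ρ F f) s' x

theorem SmoothOn.empty : SmoothOn E ρ ∅ :=
  ⟨Ioi 0, isOpen_Ioi, mem_Ioi.2 one_pos, Subset.rfl, fun _ => 0, measurable_const,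
    fun _ _ hx => hx.elim⟩

theorem isFlattening_eq [StandardBorelSpace X] (hE : Equivalence E) (hρ : IsCocycle E ρ) (f : X → ℝ)
    (s : ℝ) : IsFlattening E ρ f s s Eq univ where
  isFinSubequiv := ⟨eq_equivalence, measurableSet_eq_fun measurable_fst measurable_snd,
    fun x _ hxy => hxy ▸ hE.refl x, fun x => (finite_singleton x).subset fun _ => Eq.symm⟩
  measurableSet := .univ
  eInvariant _ _ _ _ := mem_univ _
  smoothOn_compl := compl_univ (α := X) ▸ .empty
  oscLE _ _ h := by
    have : classAvg ρ Eq f = f := funext fun x => avgOn_singleton hρ hE x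
    rwa [this]

theorem IsCBER.exists_isFlattening_two_thirds [StandardBorelSpace X] (hE : IsCBER E)
    (hρ : IsCocycle E ρ) (hf : Measurable f) (s : ℝ) :
    ∃ F B, IsFlattening E ρ f s (2 / 3 * s) F B := by
  obtain ⟨F, C, h⟩ := hE.exists_isMaximalFamily (Good := IsBalanced E ρ f s) fun S =>
    measurableSet_isBalanced hE hρ hf
  let L := sparsePart E ρ (lowSet E f s \ C)
  let H := sparsePart E ρ (highSet E f s \ C)
  have hlow := (measurableSet_lowSet (s := s) hE hf).diff h.measurableSet
  have hhigh := (measurableSet_highSet (s := s) hE hf).diff h.measurableSet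
  have hL : MeasurableSet L := measurableSet_sparsePart hE hρ hlow
  have hH : MeasurableSet H := measurableSet_sparsePart hE hρ hhigh
  refine ⟨F, (saturation E (L ∪ H))ᶜ, h.isFinSubequiv,
    (hE.measurableSet_saturation (hL.union hH)).compl, eInvariant_compl_saturation hE.1 _, ?_,
    fun x hx hosc y z hxy hxz => ?_⟩
  · rw [compl_compl]
    exact (SmoothOn.union hL (smoothOn_sparsePart hE hρ hlow)
      (smoothOn_sparsePart hE hρ hhigh)).saturation hE hρ (hL.union hH)
  · have hfz := hosc.classInf_le hxz
    have hfy := hosc.le_classInf_add hxy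
    have hz := (h.le_classAvg_and_classAvg_le hE.1 hρ z).1
    have hy := (h.le_classAvg_and_classAvg_le hE.1 hρ y).2
    rw [← classInf_congr hE.1 f hxz] at hz
    rw [← classInf_congr hE.1 f hxy] at hy
    have hs : 0 ≤ s := by linarith [hosc.le_classInf_add hxz]
    rcases hz with hz | ⟨hzlow, hz⟩ <;> rcases hy with hy | ⟨hyhigh, hy⟩
    · linarith
    · linarith
    · linarith
    · have hoscz : OscLE E f s z := fun u v hzu hzv =>
        hosc u v (hE.1.trans hxz hzu) (hE.1.trans hxz hzv)
      refine absurd ?_ hx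
      rcases h.mem_sparsePart_or hE.1 hρ (hE.1.trans (hE.1.symm hxz) hxy) hoscz hzlow hyhigh
        with hzL | hyH
      · exact ⟨z, hxz, .inl hzL⟩
      · exact ⟨y, hxy, .inr hyH⟩

theorem IsFlattening.trans [StandardBorelSpace X] (hE : IsCBER E) (hρ : IsCocycle E ρ)
    (h : IsFlattening E ρ f s s' F B) {T : Set X} (hT : MeasurableSet T) {t : X → T}
    (ht : Measurable t) (htF : ∀ x u, t x = u ↔ F x u) {F' : T → T → Prop} {B' : Set T}
    (h' : IsFlattening (fun u v : T => E u v) (fun u v => quotientCocycle ρ F u v)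
      (fun u => classAvg ρ F f u) s' s'' F' B') :
    IsFlattening E ρ f s s'' (fun x y => F' (t x) (t y)) (B ∩ t ⁻¹' B') := by
  have := hT.standardBorel
  have hF := h.isFinSubequiv
  have hFt : ∀ x, F x (t x) := fun x => (htF x _).1 rfl
  have hEt : ∀ x y, E x y → E (t x) (t y) := fun x y hxy =>
    hE.1.trans (hE.1.symm (hF.2.2.1 (hFt x))) (hE.1.trans hxy (hF.2.2.1 (hFt y)))
  refine ⟨hF.comap hE.1 ht htF h'.isFinSubequiv, h.measurableSet.inter (ht h'.measurableSet),
    fun x y hxy hx => ⟨h.eInvariant hxy hx.1, h'.eInvariant (hEt x y hxy) hx.2⟩, ?_,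
    fun x hx hosc y z hxy hxz => ?_⟩
  · rw [compl_inter, ← preimage_compl]
    refine h.smoothOn_compl.union h.measurableSet.compl <| h'.smoothOn_compl.comap ht
      (fun u => ((hF.finite_class u).subset fun x => (htF x u).1).countable) (mapsTo_preimage _ _)
      (hE.measurable_rSize hρ (hF.isBorelAssignment hE.1)) (hF.rSize_pos hρ) hEt fun x y hxy => ?_
    exact hF.quotientCocycle_congr hE.1 hρ (hFt x) (hFt y) hxy
  · have hosc' : OscLE (fun u v : T => E u v) (fun u => classAvg ρ F f u) s' (t x) :=
      fun u v hu hv => h.oscLE x hx.1 hosc u v (hE.1.trans (hF.2.2.1 (hFt x)) hu)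
        (hE.1.trans (hF.2.2.1 (hFt x)) hv)
    rw [hF.classAvg_comap hE.1 hρ ht htF h'.isFinSubequiv,
      hF.classAvg_comap hE.1 hρ ht htF h'.isFinSubequiv]
    exact h'.oscLE (t x) hx.2 hosc' (t y) (t z) (hEt x y hxy) (hEt x z hxz)

theorem IsCBER.exists_isFlattening_pow [StandardBorelSpace X] (hE : IsCBER E) (hρ : IsCocycle E ρ)
    (hf : Measurable f) (s : ℝ) (n : ℕ) : ∃ F B, IsFlattening E ρ f s ((2 / 3) ^ n * s) F B := by
  induction n with
  | zero =>
    rw [pow_zero, one_mul]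
    exact ⟨Eq, univ, isFlattening_eq hE.1 hρ f s⟩
  | succ n ih =>
    obtain ⟨F, B, h⟩ := ih
    have hF := h.isFinSubequiv
    obtain ⟨T, hT, t, ht, htF⟩ := hF.exists_transversal
    have := hT.standardBorel
    have hi : Measurable ((↑) : T → X) := measurable_subtype_coe
    have hf' : Measurable fun u : T => classAvg ρ F f u :=
      (hE.measurable_avgOn hρ hf (hF.isBorelAssignment hE.1)).comp hi
    obtain ⟨F', B', h'⟩ := (hE.comap hi Subtype.val_injective).exists_isFlattening_two_thirds
      ((hF.isCocycle_quotientCocycle hE hρ).comap hi) hf' ((2 / 3) ^ n * s)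
    rw [pow_succ', mul_assoc]
    exact ⟨_, _, h.trans hE hρ hT ht htF h'⟩

/-- The restriction of the equivalence relation `F` to `B`, extended by the diagonal. -/
def restrictTo (F : X → X → Prop) (B : Set X) (x y : X) : Prop :=
  x = y ∨ F x y ∧ x ∈ B ∧ y ∈ B

theorem IsFinSubequiv.isFinSubequivOn_restrictTo [MeasurableEq X] (hF : IsFinSubequiv E F)
    (hB : MeasurableSet B) : IsFinSubequivOn E B (restrictTo F B) := by
  obtain ⟨hequiv, hm, hFE, hfin⟩ := hF
  refine ⟨⟨fun _ => .inl rfl, ?_, ?_⟩, (measurableSet_eq_fun measurable_fst measurable_snd).union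
    (hm.inter ((measurable_fst hB).inter (measurable_snd hB))),
    fun x y => .imp_right fun h => ⟨hFE h.1, h.2⟩, fun x => (hfin x).subset ?_⟩
  · rintro x y (rfl | ⟨hxy, hx, hy⟩)
    exacts [.inl rfl, .inr ⟨hequiv.symm hxy, hy, hx⟩]
  · rintro x y z (rfl | ⟨hxy, hx, hy⟩) (rfl | ⟨hyz, hy', hz⟩)
    exacts [.inl rfl, .inr ⟨hyz, hy', hz⟩, .inr ⟨hxy, hx, hy⟩, .inr ⟨hequiv.trans hxy hyz, hx, hz⟩]
  · rintro y (rfl | h)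
    exacts [hequiv.refl _, h.1]

theorem IsFinSubequiv.setOf_restrictTo (hF : IsFinSubequiv E F) (hE : Equivalence E)
    (hB : EInvariant E B) {x : X} (hx : x ∈ B) : {z | restrictTo F B z x} = {z | F z x} := by
  ext z
  refine ⟨?_, fun hz => .inr ⟨hz, hB (hE.symm (hF.2.2.1 hz)) hx, hx⟩⟩
  rintro (rfl | h)
  exacts [hF.1.refl _, h.1]

end Flattening

theorem stmt18_general [MeasurableSpace X] [StandardBorelSpace X]
    (E : X → X → Prop) (hE : IsCBER E)
    (ρ : X → X → ℝ) (hρ : IsCocycle E ρ)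
    (f : X → ℝ) (hf : Measurable f)
    (δ : ℝ) (hδ : 0 < δ) (ε : ℝ)
    (hε : ∃ s : ℝ, (∀ ⦃x y : X⦄, E x y → f x - f y ≤ s) ∧ s < ε) :
    ∃ B : Set X, MeasurableSet B ∧ EInvariant E B ∧
      ∃ F : X → X → Prop, IsFinSubequivOn E B F ∧
        SmoothOn E ρ Bᶜ ∧
        ∃ s : ℝ, (∀ ⦃x⦄, x ∈ B → ∀ ⦃y⦄, y ∈ B → E x y →
            avgOn ρ f {z | F z x} Set.univ x - avgOn ρ f {z | F z y} Set.univ y ≤ s) ∧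
          s < δ * ε := by
  obtain ⟨s, hs, hsε⟩ := hε
  obtain ⟨n, hn⟩ := exists_pow_lt_of_lt_one hδ (by norm_num : (2 / 3 : ℝ) < 1)
  obtain ⟨F, B, h⟩ := hE.exists_isFlattening_pow hρ hf s n
  have hF := h.isFinSubequiv
  refine ⟨B, h.measurableSet, h.eInvariant, restrictTo F B,
    hF.isFinSubequivOn_restrictTo h.measurableSet, h.smoothOn_compl, ?_⟩
  rcases isEmpty_or_nonempty X with hX | ⟨⟨x₀⟩⟩
  · exact ⟨δ * ε - 1, fun x => hX.elim x, sub_one_lt _⟩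
  have hs0 : 0 ≤ s := (sub_self (f x₀)).ge.trans (hs (hE.1.refl x₀))
  refine ⟨(2 / 3) ^ n * s, fun x hx y hy hxy => ?_, ?_⟩
  · have hosc : OscLE E f s x := fun u v hxu hxv => hs (hE.1.trans (hE.1.symm hxu) hxv)
    rw [hF.setOf_restrictTo hE.1 h.eInvariant hx, hF.setOf_restrictTo hE.1 h.eInvariant hy]
    exact h.oscLE x hx hosc x y (hE.1.refl x) hxy
  · exact mul_lt_mul'' hn hsε (by positivity) hs0

/-- First approximation lemma for cocycles: given Borel `f : X → [0,∞)`, `δ > 0`, and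
`ε > sup{f(x) − f(y) : (x,y) ∈ E}`, there are an `E`-invariant Borel set `B` and a finite
Borel subequivalence relation `F` of `E ↾ B` such that `ρ ↾ (E ↾ Bᶜ)` is smooth and
`δ·ε > sup{∫ f dμ^ρ_{[x]_F} − ∫ f dμ^ρ_{[y]_F} : (x,y) ∈ E ↾ B}`. -/
theorem stmt18 [MeasurableSpace X] [StandardBorelSpace X]
    (E : X → X → Prop) (hE : IsCBER E)
    (ρ : X → X → ℝ) (hρ : IsCocycle E ρ)
    (f : X → ℝ) (hf : Measurable f) (hf0 : ∀ x, 0 ≤ f x)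
    (δ : ℝ) (hδ : 0 < δ) (ε : ℝ)
    (hε : ∃ s : ℝ, (∀ ⦃x y : X⦄, E x y → f x - f y ≤ s) ∧ s < ε) :
    ∃ B : Set X, MeasurableSet B ∧ EInvariant E B ∧
      ∃ F : X → X → Prop, IsFinSubequivOn E B F ∧
        SmoothOn E ρ Bᶜ ∧
        ∃ s : ℝ, (∀ ⦃x⦄, x ∈ B → ∀ ⦃y⦄, y ∈ B → E x y →
            avgOn ρ f {z | F z x} Set.univ x - avgOn ρ f {z | F z y} Set.univ y ≤ s) ∧
          s < δ * ε := by
  exact stmt18_general E hE ρ hρ f hf δ hδ ε hε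

end CocycleNadkarni
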